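/- Fix ρ > 1. For f ∈ L¹_loc(μ) the following are equivalent: (a) f ∈ RBMO(μ); (b) there is a constant C_b such that ∫_Q |f − m_Q f| dμ ≤ C_b·μ(ρQ) for every cube Q, and |m_Q f − m_R f| ≤ C_b·K_{Q,R}·(μ(ρQ)/μ(Q) + μ(ρR)/μ(R)) for all cubes Q ⊂ R; (c) there is a constant C_c such that ∫_Q |f − m_Q f| dμ ≤ C_c·μ(Q) for every doubling cube Q, and |m_Q f − m_R f| ≤ C_c·K_{Q,R} for all doubling cubes Q ⊂ R. Moreover the best constants C_b and C_c are comparable to ‖f‖_*, with comparability constants depending only on ρ, d, n, C₀, β_d. -/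

import Mathlib

/-!
Common definitions for formalizing Tolsa, "BMO, H¹, and Calderón–Zygmund
operators for non doubling measures".
-/

open MeasureTheory Metric Set Function
open scoped Classical
open scoped ENNReal NNReal BigOperators

noncomputable section

/-- `ℝ^d` with the Euclidean metric. -/
abbrev Euc (d : ℕ) := EuclideanSpace ℝ (Fin d)

variable {d : ℕ}

/-- The support of a measure: points all of whose balls have positive measure. -/
def measSupp (μ : MeasureTheory.Measure (Euc d)) : Set (Euc d) :=
  {x | ∀ r : ℝ, 0 < r → 0 < μ (Metric.ball x r)}

/-- The growth condition `μ(B(x,r)) ≤ C₀ rⁿ`. -/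
def GrowthBound (μ : MeasureTheory.Measure (Euc d)) (n : ℕ) (C₀ : ℝ) : Prop :=
  ∀ (x : Euc d) (r : ℝ), 0 < r → μ (Metric.ball x r) ≤ ENNReal.ofReal (C₀ * r ^ n)

/-- A (closed, axis-parallel) cube with center in the support of `μ` and positive
side length. -/
structure CubeOf (μ : MeasureTheory.Measure (Euc d)) where
  c : Euc d
  ℓ : ℝ
  ℓ_pos : 0 < ℓ
  c_mem : c ∈ measSupp μ

namespace CubeOf

variable {μ : MeasureTheory.Measure (Euc d)}

/-- The set of points of a cube. -/
def set (Q : CubeOf μ) : Set (Euc d) := {y | ∀ i, |y i - Q.c i| ≤ Q.ℓ / 2}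

/-- The concentric dilation `aQ` of a cube, as a set. -/
def dil (Q : CubeOf μ) (a : ℝ) : Set (Euc d) := {y | ∀ i, |y i - Q.c i| ≤ a * Q.ℓ / 2}

/-- The cube `2^k Q`. -/
def pow2 (Q : CubeOf μ) (k : ℕ) : CubeOf μ :=
  ⟨Q.c, 2 ^ k * Q.ℓ, mul_pos (by positivity) Q.ℓ_pos, Q.c_mem⟩

/-- The cube `6^k Q`. -/
def pow6 (Q : CubeOf μ) (k : ℕ) : CubeOf μ :=
  ⟨Q.c, 6 ^ k * Q.ℓ, mul_pos (by positivity) Q.ℓ_pos, Q.c_mem⟩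

end CubeOf

/-- `(α,β)`-doubling cube: `μ(αQ) ≤ β μ(Q)`. -/
def IsDoubling (μ : MeasureTheory.Measure (Euc d)) (α β : ℝ) (Q : CubeOf μ) : Prop :=
  μ (Q.dil α) ≤ ENNReal.ofReal β * μ Q.set

/-- `N_{Q,R}`: the first integer `k ≥ 1` such that `l(2^k Q) ≥ l(R)`. -/
def NQR {μ : MeasureTheory.Measure (Euc d)} (Q R : CubeOf μ) : ℕ :=
  sInf {k : ℕ | 1 ≤ k ∧ R.ℓ ≤ 2 ^ k * Q.ℓ}

/-- The coefficient `K_{Q,R} = 1 + ∑_{k=1}^{N_{Q,R}} μ(2^k Q)/l(2^k Q)^n`. -/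
def Kcoef {μ : MeasureTheory.Measure (Euc d)} (n : ℕ) (Q R : CubeOf μ) : ℝ :=
  1 + ∑ k ∈ Finset.Icc 1 (NQR Q R), (μ ((Q.pow2 k).set)).toReal / ((2 ^ k * Q.ℓ) ^ n)

/-- The smallest `N ≥ 0` such that `2^N Q` is `(2,βd)`-doubling. -/
def tildeIdx (μ : MeasureTheory.Measure (Euc d)) (βd : ℝ) (Q : CubeOf μ) : ℕ :=
  sInf {N : ℕ | IsDoubling μ 2 βd (Q.pow2 N)}

/-- The cube `Q̃`: the smallest cube `2^N Q`, `N ≥ 0`, which is `(2,βd)`-doubling. -/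
def CubeOf.tilde {μ : MeasureTheory.Measure (Euc d)} (Q : CubeOf μ) (βd : ℝ) : CubeOf μ :=
  Q.pow2 (tildeIdx μ βd Q)

/-- The mean `m_Q f` of `f` over the cube `Q` with respect to `μ`. -/
def mQ (μ : MeasureTheory.Measure (Euc d)) (Q : CubeOf μ) (f : Euc d → ℝ) : ℝ :=
  ⨍ x in Q.set, f x ∂μ

/-- For `μ`-a.e. `x` there are `(2,βd)`-doubling cubes centered at `x` of arbitrarily
small side length. -/
def SmallDoublingAE (μ : MeasureTheory.Measure (Euc d)) (βd : ℝ) : Prop :=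
  ∀ᵐ x ∂μ, ∀ ℓ₀ : ℝ, 0 < ℓ₀ → ∃ Q : CubeOf μ, Q.c = x ∧ Q.ℓ < ℓ₀ ∧ IsDoubling μ 2 βd Q

/-- `C` is an admissible constant in the definition of the `RBMO(μ)` norm of `f`. -/
def RBMOBoundWith (μ : MeasureTheory.Measure (Euc d)) (n : ℕ) (βd : ℝ)
    (f : Euc d → ℝ) (C : ℝ≥0∞) : Prop :=
  (∀ Q : CubeOf μ,
    ∫⁻ x in Q.set, ENNReal.ofReal |f x - mQ μ (Q.tilde βd) f| ∂μ ≤ C * μ (Q.dil 2)) ∧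
  (∀ Q R : CubeOf μ, Q.set ⊆ R.set → IsDoubling μ 2 βd Q → IsDoubling μ 2 βd R →
    ENNReal.ofReal |mQ μ Q f - mQ μ R f| ≤ C * ENNReal.ofReal (Kcoef n Q R))

/-- The `RBMO(μ)` norm `‖f‖_*` (with value `∞` if `f ∉ RBMO(μ)`). -/
def rbmoNorm (μ : MeasureTheory.Measure (Euc d)) (n : ℕ) (βd : ℝ) (f : Euc d → ℝ) : ℝ≥0∞ :=
  sInf {C | RBMOBoundWith μ n βd f C}

/-- The conditions defining `‖f‖_{**,(ρ)}`, for a given family of numbers `fQ`. -/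
def StarStarBoundWith (μ : MeasureTheory.Measure (Euc d)) (n : ℕ) (ρ : ℝ)
    (f : Euc d → ℝ) (fQ : CubeOf μ → ℝ) (C : ℝ≥0∞) : Prop :=
  (∀ Q : CubeOf μ, ∫⁻ x in Q.set, ENNReal.ofReal |f x - fQ Q| ∂μ ≤ C * μ (Q.dil ρ)) ∧
  (∀ Q R : CubeOf μ, Q.set ⊆ R.set →
    ENNReal.ofReal |fQ Q - fQ R| ≤ C * ENNReal.ofReal (Kcoef n Q R))

/-- The norm `‖f‖_{**,(ρ)}`. -/
def starStarNorm (μ : MeasureTheory.Measure (Euc d)) (n : ℕ) (ρ : ℝ) (f : Euc d → ℝ) : ℝ≥0∞ :=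
  sInf {C | ∃ fQ : CubeOf μ → ℝ, StarStarBoundWith μ n ρ f fQ C}

end

noncomputable section

variable {d : ℕ}

/-- The conditions defining the `RBMO^p(μ)` norm. -/
def RBMOpBoundWith (μ : MeasureTheory.Measure (Euc d)) (n : ℕ) (βd : ℝ) (p : ℝ)
    (f : Euc d → ℝ) (C : ℝ≥0∞) : Prop :=
  (∀ Q : CubeOf μ,
    ∫⁻ x in Q.set, ENNReal.ofReal |f x - mQ μ (Q.tilde βd) f| ^ p ∂μ ≤ C ^ p * μ (Q.dil 2)) ∧
  (∀ Q R : CubeOf μ, Q.set ⊆ R.set → IsDoubling μ 2 βd Q → IsDoubling μ 2 βd R →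
    ENNReal.ofReal |mQ μ Q f - mQ μ R f| ≤ C * ENNReal.ofReal (Kcoef n Q R))

/-- The `RBMO^p(μ)` norm `‖f‖_{*,p}`. -/
def rbmoPNorm (μ : MeasureTheory.Measure (Euc d)) (n : ℕ) (βd : ℝ) (p : ℝ)
    (f : Euc d → ℝ) : ℝ≥0∞ :=
  sInf {C | RBMOpBoundWith μ n βd p f C}

/-- Condition (b) of Lemma `fifi` of the paper, with constant `Cb`. -/
def CondB (μ : MeasureTheory.Measure (Euc d)) (n : ℕ) (ρ : ℝ)
    (f : Euc d → ℝ) (Cb : ℝ≥0∞) : Prop :=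
  (∀ Q : CubeOf μ, ∫⁻ x in Q.set, ENNReal.ofReal |f x - mQ μ Q f| ∂μ ≤ Cb * μ (Q.dil ρ)) ∧
  (∀ Q R : CubeOf μ, Q.set ⊆ R.set →
    ENNReal.ofReal |mQ μ Q f - mQ μ R f| ≤
      Cb * ENNReal.ofReal (Kcoef n Q R) * (μ (Q.dil ρ) / μ Q.set + μ (R.dil ρ) / μ R.set))

/-- Condition (c) of Lemma `fifi` of the paper, with constant `Cc`. -/
def CondC (μ : MeasureTheory.Measure (Euc d)) (n : ℕ) (βd : ℝ)
    (f : Euc d → ℝ) (Cc : ℝ≥0∞) : Prop :=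
  (∀ Q : CubeOf μ, IsDoubling μ 2 βd Q →
    ∫⁻ x in Q.set, ENNReal.ofReal |f x - mQ μ Q f| ∂μ ≤ Cc * μ Q.set) ∧
  (∀ Q R : CubeOf μ, Q.set ⊆ R.set → IsDoubling μ 2 βd Q → IsDoubling μ 2 βd R →
    ENNReal.ofReal |mQ μ Q f - mQ μ R f| ≤ Cc * ENNReal.ofReal (Kcoef n Q R))

/-- The conditions defining the norm `‖f‖_∘`, relative to a choice `αQ` of minimizers. -/
def CircBoundWith (μ : MeasureTheory.Measure (Euc d)) (n : ℕ) (βd : ℝ)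
    (f : Euc d → ℝ) (αQ : CubeOf μ → ℝ) (C : ℝ≥0∞) : Prop :=
  (∀ Q : CubeOf μ,
    ∫⁻ x in Q.set, ENNReal.ofReal |f x - αQ (Q.tilde βd)| ∂μ ≤ C * μ (Q.dil 2)) ∧
  (∀ Q R : CubeOf μ, Q.set ⊆ R.set → IsDoubling μ 2 βd Q → IsDoubling μ 2 βd R →
    ENNReal.ofReal |αQ Q - αQ R| ≤ C * ENNReal.ofReal (Kcoef n Q R))

/-- The norm `‖f‖_∘`, relative to a choice `αQ` of minimizers. -/
def circNorm (μ : MeasureTheory.Measure (Euc d)) (n : ℕ) (βd : ℝ)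
    (f : Euc d → ℝ) (αQ : CubeOf μ → ℝ) : ℝ≥0∞ :=
  sInf {C | CircBoundWith μ n βd f αQ C}

/-- An atomic block: a function supported on a cube `R`, with zero integral, of the
form `b = ∑ λⱼ aⱼ` with `aⱼ` supported on cubes `Qⱼ ⊆ R` and
`‖aⱼ‖_{L∞(μ)} ≤ (μ(2Qⱼ) K_{Qⱼ,R})⁻¹`. -/
structure AtomicBlock (μ : MeasureTheory.Measure (Euc d)) (n : ℕ) where
  b : Euc d → ℝ
  R : CubeOf μ
  lam : ℕ → ℝ
  a : ℕ → Euc d → ℝ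
  Qj : ℕ → CubeOf μ
  integrable : MeasureTheory.Integrable b μ
  supp_b : ∀ x ∉ R.set, b x = 0
  int_zero : ∫ x, b x ∂μ = 0
  Qj_sub : ∀ j, (Qj j).set ⊆ R.set
  a_supp : ∀ j, ∀ x ∉ (Qj j).set, a j x = 0
  a_meas : ∀ j, MeasureTheory.AEStronglyMeasurable (a j) μ
  a_bound : ∀ j, MeasureTheory.eLpNorm (a j) ⊤ μ ≤
    (μ ((Qj j).dil 2) * ENNReal.ofReal (Kcoef n (Qj j) R))⁻¹
  lam_summable : Summable fun j => |lam j|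
  b_eq : ∀ᵐ x ∂μ, HasSum (fun j => lam j * a j x) (b x)

/-- `|b|_{H^{1,∞}_atb(μ)} = ∑ⱼ |λⱼ|` for the given decomposition. -/
def AtomicBlock.size {μ : MeasureTheory.Measure (Euc d)} {n : ℕ}
    (B : AtomicBlock μ n) : ℝ :=
  ∑' j, |B.lam j|

/-- The `H^{1,∞}_atb(μ)` norm (with value `∞` outside the space). -/
def hatbNorm (μ : MeasureTheory.Measure (Euc d)) (n : ℕ) (f : Euc d → ℝ) : ℝ≥0∞ :=
  sInf {t : ℝ≥0∞ | ∃ B : ℕ → AtomicBlock μ n,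
    (∀ᵐ x ∂μ, HasSum (fun i => (B i).b x) (f x)) ∧
    t = ∑' i, ENNReal.ofReal ((B i).size)}

/-- A `p`-atomic block: like an atomic block, but with the size condition
`‖aⱼ‖_{L^p(μ)} ≤ μ(2Qⱼ)^{1/p-1} K_{Qⱼ,R}⁻¹`. -/
structure PAtomicBlock (μ : MeasureTheory.Measure (Euc d)) (n : ℕ) (p : ℝ) where
  b : Euc d → ℝ
  R : CubeOf μ
  lam : ℕ → ℝ
  a : ℕ → Euc d → ℝ
  Qj : ℕ → CubeOf μ
  integrable : MeasureTheory.Integrable b μ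
  supp_b : ∀ x ∉ R.set, b x = 0
  int_zero : ∫ x, b x ∂μ = 0
  Qj_sub : ∀ j, (Qj j).set ⊆ R.set
  a_supp : ∀ j, ∀ x ∉ (Qj j).set, a j x = 0
  a_meas : ∀ j, MeasureTheory.AEStronglyMeasurable (a j) μ
  a_bound : ∀ j, MeasureTheory.eLpNorm (a j) (ENNReal.ofReal p) μ ≤
    μ ((Qj j).dil 2) ^ (1 / p - 1) * (ENNReal.ofReal (Kcoef n (Qj j) R))⁻¹
  lam_summable : Summable fun j => |lam j|
  b_eq : ∀ᵐ x ∂μ, HasSum (fun j => lam j * a j x) (b x)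

/-- `|b|_{H^{1,p}_atb(μ)} = ∑ⱼ |λⱼ|` for the given decomposition. -/
def PAtomicBlock.size {μ : MeasureTheory.Measure (Euc d)} {n : ℕ} {p : ℝ}
    (B : PAtomicBlock μ n p) : ℝ :=
  ∑' j, |B.lam j|

/-- The `H^{1,p}_atb(μ)` norm (with value `∞` outside the space). -/
def hatbPNorm (μ : MeasureTheory.Measure (Euc d)) (n : ℕ) (p : ℝ) (f : Euc d → ℝ) : ℝ≥0∞ :=
  sInf {t : ℝ≥0∞ | ∃ B : ℕ → PAtomicBlock μ n p,
    (∀ᵐ x ∂μ, HasSum (fun i => (B i).b x) (f x)) ∧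
    t = ∑' i, ENNReal.ofReal ((B i).size)}

/-- A Calderón–Zygmund kernel of dimension `n`, with constant `Ck` and Hölder
exponent `δ`. -/
def CZKernelBound (n : ℕ) (k : Euc d → Euc d → ℝ) (Ck δ : ℝ) : Prop :=
  (∀ x y : Euc d, x ≠ y → |k x y| ≤ Ck / dist x y ^ (n : ℝ)) ∧
  (∀ x x' y : Euc d, x ≠ y → dist x x' ≤ dist x y / 2 →
    |k x y - k x' y| + |k y x - k y x'| ≤ Ck * dist x x' ^ δ / dist x y ^ ((n : ℝ) + δ))

/-- The truncated operator `T_ε f(x) = ∫_{|x-y|>ε} k(x,y) f(y) dμ(y)`. -/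
def trunc (μ : MeasureTheory.Measure (Euc d)) (k : Euc d → Euc d → ℝ) (ε : ℝ)
    (f : Euc d → ℝ) (x : Euc d) : ℝ :=
  ∫ y in {y | ε < dist x y}, k x y * f y ∂μ

/-- The non-centered doubling maximal operator `N`. -/
def Nop (μ : MeasureTheory.Measure (Euc d)) (βd : ℝ) (f : Euc d → ℝ) (x : Euc d) : ℝ≥0∞ :=
  ⨆ (Q : CubeOf μ) (_ : x ∈ Q.set) (_ : IsDoubling μ 2 βd Q),
    (∫⁻ y in Q.set, ENNReal.ofReal |f y| ∂μ) / μ Q.set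

/-- The sharp maximal operator `M^♯`. -/
def Msharp (μ : MeasureTheory.Measure (Euc d)) (n : ℕ) (βd : ℝ)
    (f : Euc d → ℝ) (x : Euc d) : ℝ≥0∞ :=
  (⨆ (Q : CubeOf μ) (_ : x ∈ Q.set),
    (∫⁻ y in Q.set, ENNReal.ofReal |f y - mQ μ (Q.tilde βd) f| ∂μ) / μ (Q.dil (3/2))) +
  ⨆ (Q : CubeOf μ) (R : CubeOf μ) (_ : x ∈ Q.set) (_ : Q.set ⊆ R.set)
      (_ : IsDoubling μ 2 βd Q) (_ : IsDoubling μ 2 βd R),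
    ENNReal.ofReal (|mQ μ Q f - mQ μ R f| / Kcoef n Q R)

/-- The weight functions `w_i = χ_{Q_i} / ∑_k χ_{Q_k}` of the Calderón–Zygmund
decomposition. -/
def czWeight {μ : MeasureTheory.Measure (Euc d)} (J : Finset ℕ) (Q : ℕ → CubeOf μ)
    (i : ℕ) (x : Euc d) : ℝ :=
  Set.indicator (Q i).set
    (fun y => (((J.filter fun kk => y ∈ (Q kk).set).card : ℝ))⁻¹) x

/-- The smallest `(6,6^{n+1})`-doubling cube of the form `6^k Q`, `k ≥ 1`. -/
def smallest6Doubling (μ : MeasureTheory.Measure (Euc d)) (n : ℕ) (Q : CubeOf μ) : CubeOf μ :=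
  Q.pow6 (sInf {k : ℕ | 1 ≤ k ∧ IsDoubling μ 6 (6 ^ (n + 1)) (Q.pow6 k)})

end

/-!
All three conditions are compared with the intermediate norm `‖f‖_{**,(ρ)}` (`StarStarBoundWith`),
in which the means are replaced by arbitrary numbers `f_Q` with `|f_Q - f_R| ≤ C K_{Q,R}` for all
nested cubes. The numbers used are the means over the smallest doubling cube `Q̂ = 2^N Q`. Along
a chain of non-doubling cubes the densities `μ(2^k Q) / l(2^k Q)ⁿ` increase geometrically while
staying bounded, so their sum is bounded and `Q̂` is close to `Q`. Two hulls `Q̂`, `R̂` are compared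
within a common doubling cube containing both. These estimates are easiest for the integral
`∫ μ(Q(x,t)) t⁻ⁿ dt/t` over the scales, which is additive and comparable to the sum in `K_{Q,R}`.

A condition known only for doubling cubes is transferred to an arbitrary cube `Q` by covering almost
all of `Q` by doubling cubes which are smaller than `Q` but joined to it by a short chain of scales,
and by Besicovitch's theorem. Finally `‖f‖_{**,(ρ)}` does not depend on `ρ > 1`: cover `Q` by a
bounded number of cubes so small that their dilations stay in a given dilation of `Q`.
-/

section Cubes

variable {d : ℕ} {x y : Euc d} {r s : ℝ}

/-- The closed cube with sides parallel to the axes, arbitrary center `x` and side length `r`.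
The sets `Q.set`, `Q.dil a` and `(Q.pow2 k).set` are definitionally of this form. -/
def cube (x : Euc d) (r : ℝ) : Set (Euc d) := {y | ∀ i, |y i - x i| ≤ r / 2}

theorem cube_subset_cube (h : ∀ i, |x i - y i| ≤ (s - r) / 2) : cube x r ⊆ cube y s := by
  intro z hz i
  linarith [hz i, h i, abs_sub_le (z i) (x i) (y i)]

theorem cube_mono (x : Euc d) (h : r ≤ s) : cube x r ⊆ cube x s :=
  cube_subset_cube fun i ↦ by rw [sub_self, abs_zero]; linarith

theorem mem_cube_self (x : Euc d) (hr : 0 ≤ r) : x ∈ cube x r := fun i ↦ by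
  rw [sub_self, abs_zero]; linarith

theorem cube_eq_preimage_closedBall (x : Euc d) (hr : 0 ≤ r) :
    cube x r = WithLp.ofLp ⁻¹' closedBall (WithLp.ofLp x) (r / 2) := by
  ext y
  rw [mem_preimage, mem_closedBall, dist_pi_le_iff (by positivity)]
  rfl

theorem isCompact_cube (x : Euc d) (hr : 0 ≤ r) : IsCompact (cube x r) := by
  rw [cube_eq_preimage_closedBall x hr]
  exact (PiLp.homeomorph 2 fun _ : Fin d ↦ ℝ).isCompact_preimage.2 (isCompact_closedBall _ _)

theorem ball_half_subset_cube (x : Euc d) (r : ℝ) : ball x (r / 2) ⊆ cube x r := fun y hy i ↦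
  (PiLp.norm_apply_le (y - x) i).trans (mem_ball_iff_norm.1 hy).le

theorem cube_subset_ball (x : Euc d) (hr : 0 < r) : cube x r ⊆ ball x ((d + 1) * r) := by
  intro y hy
  rw [mem_ball, EuclideanSpace.dist_eq, Real.sqrt_lt' (by positivity)]
  calc ∑ i, dist (y i) (x i) ^ 2 ≤ ∑ _i : Fin d, (r / 2) ^ 2 :=
        Finset.sum_le_sum fun i _ ↦ pow_le_pow_left₀ dist_nonneg (hy i) 2
    _ = d * (r / 2) ^ 2 := by simp
    _ < ((d + 1) * r) ^ 2 := by
        have : 0 < r ^ 2 := by positivity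
        nlinarith [mul_nonneg d.cast_nonneg this.le, mul_nonneg (sq_nonneg (d : ℝ)) this.le]

end Cubes

section Growth

variable {d n : ℕ} {μ : Measure (Euc d)} {A : ℝ≥0} {x y : Euc d} {r s : ℝ}

/-- The growth condition of degree `n` on cubes instead of balls. -/
def CubeGrowth (μ : Measure (Euc d)) (n : ℕ) (A : ℝ≥0) : Prop :=
  ∀ (x : Euc d) (r : ℝ), 0 < r → μ (cube x r) ≤ ENNReal.ofReal (A * r ^ n)

theorem GrowthBound.cubeGrowth {C₀ : ℝ} (h : GrowthBound μ n C₀) :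
    CubeGrowth μ n (C₀.toNNReal * (d + 1) ^ n) := by
  intro x r hr
  calc μ (cube x r) ≤ μ (ball x ((d + 1) * r)) := measure_mono (cube_subset_ball x hr)
    _ ≤ ENNReal.ofReal (C₀ * ((d + 1) * r) ^ n) := h x _ (by positivity)
    _ ≤ ENNReal.ofReal (↑(C₀.toNNReal * (d + 1) ^ n) * r ^ n) := by
        rw [mul_pow, ← mul_assoc]
        push_cast
        gcongr
        exact Real.le_coe_toNNReal C₀

theorem CubeGrowth.measure_ne_top (h : CubeGrowth μ n A) (x : Euc d) (r : ℝ) :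
    μ (cube x r) ≠ ⊤ :=
  (((measure_mono (cube_mono x (le_max_left r 1))).trans (h x _ (by positivity))).trans_lt
    ENNReal.ofReal_lt_top).ne

/-- The `n`-dimensional density `μ(Q) / l(Q)ⁿ` of the cube with center `x` and side `r`. -/
noncomputable def density (μ : Measure (Euc d)) (n : ℕ) (x : Euc d) (r : ℝ) : ℝ :=
  μ.real (cube x r) / r ^ n

theorem density_nonneg (μ : Measure (Euc d)) (n : ℕ) (x : Euc d) (hr : 0 ≤ r) :
    0 ≤ density μ n x r := by
  unfold density; positivity

theorem CubeGrowth.density_le (h : CubeGrowth μ n A) (x : Euc d) (hr : 0 < r) :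
    density μ n x r ≤ A :=
  (div_le_iff₀ (by positivity)).2 <| ENNReal.toReal_le_of_le_ofReal (by positivity) (h x r hr)

/-- The continuous counterpart `∫_r^s μ(Q(x,t)) t⁻ⁿ dt/t` of the sum over the dyadic scales between
`r` and `s` in the coefficients `K_{Q,R}`. Unlike that sum it is exactly additive. -/
noncomputable def scaleIntegral (μ : Measure (Euc d)) (n : ℕ) (x : Euc d) (r s : ℝ) : ℝ :=
  ∫ t in r..s, μ.real (cube x t) / t ^ (n + 1)

theorem CubeGrowth.monotone_measureReal (h : CubeGrowth μ n A) (x : Euc d) :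
    Monotone fun t ↦ μ.real (cube x t) := fun _ t hst ↦
  measureReal_mono (cube_mono x hst) (h.measure_ne_top x t)

theorem CubeGrowth.intervalIntegrable (h : CubeGrowth μ n A) (x : Euc d) (k : ℕ) (hr : 0 < r)
    (hs : 0 < s) : IntervalIntegrable (fun t ↦ μ.real (cube x t) / t ^ k) volume r s := by
  simp only [div_eq_mul_inv]
  refine (h.monotone_measureReal x).intervalIntegrable.mul_continuousOn
    (ContinuousOn.inv₀ (by fun_prop) fun t ht ↦ ?_)
  exact pow_ne_zero k ((lt_min hr hs).trans_le ht.1).ne'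

theorem CubeGrowth.scaleIntegral_add {t : ℝ} (h : CubeGrowth μ n A) (x : Euc d) (hr : 0 < r)
    (hs : 0 < s) (ht : 0 < t) :
    scaleIntegral μ n x r s + scaleIntegral μ n x s t = scaleIntegral μ n x r t :=
  intervalIntegral.integral_add_adjacent_intervals (h.intervalIntegrable x _ hr hs)
    (h.intervalIntegrable x _ hs ht)

theorem scaleIntegral_nonneg (μ : Measure (Euc d)) (n : ℕ) (x : Euc d) (hr : 0 ≤ r)
    (hrs : r ≤ s) : 0 ≤ scaleIntegral μ n x r s :=
  intervalIntegral.integral_nonneg hrs fun t ht ↦ by have := hr.trans ht.1; positivity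

theorem CubeGrowth.scaleIntegral_mono {r' s' : ℝ} (h : CubeGrowth μ n A) (x : Euc d)
    (hr' : 0 < r') (hr : r' ≤ r) (hs : 0 < s) (hs' : s ≤ s') :
    scaleIntegral μ n x r s ≤ scaleIntegral μ n x r' s' := by
  have hr0 := hr'.trans_le hr
  linarith [scaleIntegral_nonneg μ n x hr'.le hr, scaleIntegral_nonneg μ n x hs.le hs',
    h.scaleIntegral_add x hr' hr0 hs, h.scaleIntegral_add x hr' hs (hs.trans_le hs')]

theorem CubeGrowth.density_le_scaleIntegral (h : CubeGrowth μ n A) (x : Euc d) (hr : 0 < r) :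
    density μ n x r ≤ 2 ^ (n + 1) * scaleIntegral μ n x r (2 * r) := by
  have hle : (∫ _t in r..2 * r, μ.real (cube x r) / (2 * r) ^ (n + 1)) ≤
      scaleIntegral μ n x r (2 * r) :=
    intervalIntegral.integral_mono_on (by linarith) intervalIntegrable_const
      (h.intervalIntegrable x _ hr (by linarith)) fun t ht ↦ by
        have := hr.trans_le ht.1
        exact div_le_div₀ measureReal_nonneg (h.monotone_measureReal x ht.1) (by positivity)
          (pow_le_pow_left₀ this.le ht.2 _)
  rw [intervalIntegral.integral_const, smul_eq_mul] at hle
  calc density μ n x r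
      = 2 ^ (n + 1) * ((2 * r - r) * (μ.real (cube x r) / (2 * r) ^ (n + 1))) := by
        unfold density; field_simp; ring
    _ ≤ _ := by gcongr

theorem CubeGrowth.scaleIntegral_le_density (h : CubeGrowth μ n A) (x : Euc d) (hr : 0 < r) :
    scaleIntegral μ n x r (2 * r) ≤ 2 ^ n * density μ n x (2 * r) := by
  calc scaleIntegral μ n x r (2 * r)
      ≤ ∫ _t in r..2 * r, μ.real (cube x (2 * r)) / r ^ (n + 1) :=
        intervalIntegral.integral_mono_on (by linarith)
          (h.intervalIntegrable x _ hr (by linarith)) intervalIntegrable_const fun t ht ↦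
            div_le_div₀ measureReal_nonneg (h.monotone_measureReal x ht.2) (by positivity)
              (pow_le_pow_left₀ hr.le ht.1 _)
    _ = 2 ^ n * density μ n x (2 * r) := by
        rw [intervalIntegral.integral_const, smul_eq_mul]
        unfold density; field_simp; ring

theorem CubeGrowth.scaleIntegral_two_mul_le (h : CubeGrowth μ n A) (x : Euc d) (hr : 0 < r) :
    scaleIntegral μ n x r (2 * r) ≤ 2 ^ n * A :=
  (h.scaleIntegral_le_density x hr).trans <| by gcongr; exact h.density_le x (by positivity)

theorem CubeGrowth.sum_scaleIntegral (h : CubeGrowth μ n A) (x : Euc d) (hr : 0 < r) (N : ℕ) :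
    ∑ k ∈ Finset.range N, scaleIntegral μ n x (2 ^ k * r) (2 * (2 ^ k * r)) =
      scaleIntegral μ n x r (2 ^ N * r) := by
  have := intervalIntegral.sum_integral_adjacent_intervals (a := fun k ↦ 2 ^ k * r) (n := N)
    fun k _ ↦ h.intervalIntegrable x (n + 1) (r := 2 ^ k * r) (s := 2 ^ (k + 1) * r)
      (by positivity) (by positivity)
  simpa only [scaleIntegral, ← mul_assoc, ← pow_succ', pow_zero, one_mul] using this

theorem CubeGrowth.sum_density_le (h : CubeGrowth μ n A) (x : Euc d) (hr : 0 < r) (N : ℕ) :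
    ∑ k ∈ Finset.range N, density μ n x (2 ^ k * r) ≤
      2 ^ (n + 1) * scaleIntegral μ n x r (2 ^ N * r) := by
  rw [← h.sum_scaleIntegral x hr, Finset.mul_sum]
  exact Finset.sum_le_sum fun k _ ↦ h.density_le_scaleIntegral x (by positivity)

theorem CubeGrowth.scaleIntegral_le_sum (h : CubeGrowth μ n A) (x : Euc d) (hr : 0 < r) (N : ℕ) :
    scaleIntegral μ n x r (2 ^ N * r) ≤
      2 ^ n * ∑ k ∈ Finset.range N, density μ n x (2 ^ (k + 1) * r) := by
  rw [← h.sum_scaleIntegral x hr, Finset.mul_sum]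
  simp only [pow_succ', mul_assoc]
  exact Finset.sum_le_sum fun k _ ↦ h.scaleIntegral_le_density x (by positivity)

theorem CubeGrowth.scaleIntegral_le_of_le (h : CubeGrowth μ n A) (x : Euc d) (hr : 0 < r)
    (hs : 0 < s) {N : ℕ} (hN : s ≤ 2 ^ N * r) : scaleIntegral μ n x r s ≤ N * (2 ^ n * A) :=
  calc scaleIntegral μ n x r s ≤ scaleIntegral μ n x r (2 ^ N * r) :=
        h.scaleIntegral_mono x hr le_rfl hs hN
    _ ≤ ∑ _k ∈ Finset.range N, 2 ^ n * (A : ℝ) := by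
        rw [← h.sum_scaleIntegral x hr]
        exact Finset.sum_le_sum fun k _ ↦ h.scaleIntegral_two_mul_le x (by positivity)
    _ = N * (2 ^ n * A) := by rw [Finset.sum_const, Finset.card_range, nsmul_eq_mul]

theorem CubeGrowth.scaleIntegral_change_center (h : CubeGrowth μ n A) (hr : 0 < r) (hrs : r ≤ s)
    (hxy : ∀ i, |x i - y i| ≤ r) :
    scaleIntegral μ n x r s ≤ 4 ^ n * (scaleIntegral μ n y r s + 2 * (2 ^ n * A)) := by
  have hs := hr.trans_le hrs
  have hcomp : IntervalIntegrable (fun t ↦ μ.real (cube y (4 * t)) / t ^ (n + 1)) volume r s := by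
    have := h.intervalIntegrable y (n + 1) (r := 4 * r) (s := 4 * s) (by linarith) (by linarith)
    have := ((this.comp_mul_left (c := 4)).const_mul (4 ^ (n + 1)))
    simp only [mul_div_cancel_left₀ _ (four_ne_zero' ℝ)] at this
    refine this.congr_ae (ae_of_all _ fun t ↦ ?_)
    beta_reduce
    rw [mul_pow, mul_div_assoc', mul_div_mul_left _ _ (by positivity)]
  calc scaleIntegral μ n x r s
      ≤ ∫ t in r..s, μ.real (cube y (4 * t)) / t ^ (n + 1) := by
        refine intervalIntegral.integral_mono_on hrs (h.intervalIntegrable x _ hr hs) hcomp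
          fun t ht ↦ ?_
        have ht0 := hr.trans_le ht.1
        refine div_le_div_of_nonneg_right (measureReal_mono (cube_subset_cube fun i ↦ ?_)
          (h.measure_ne_top y _)) (by positivity)
        linarith [hxy i, ht.1]
    _ = 4 ^ n * scaleIntegral μ n y (4 * r) (4 * s) := by
        rw [scaleIntegral, ← intervalIntegral.mul_integral_comp_mul_left, ← mul_assoc,
          ← intervalIntegral.integral_const_mul]
        refine intervalIntegral.integral_congr fun t _ ↦ ?_
        simp only [mul_pow]
        field_simp
        ring
    _ ≤ 4 ^ n * (scaleIntegral μ n y r s + 2 * (2 ^ n * A)) := by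
        gcongr
        have hmono := h.scaleIntegral_mono y hr (by linarith : r ≤ 4 * r) (by linarith) le_rfl
          (s := 4 * s)
        have hshort := h.scaleIntegral_le_of_le y hs (by linarith) (N := 2) (s := 4 * s)
          (by linarith)
        push_cast at hshort
        linarith [h.scaleIntegral_add y hr hs (by linarith : 0 < 4 * s)]

end Growth

section Coefficients

variable {d n : ℕ} {μ : Measure (Euc d)} {A : ℝ≥0} {Q R : CubeOf μ}

theorem CubeOf.measure_dil_pos (Q : CubeOf μ) {a : ℝ} (ha : 0 < a) : 0 < μ (Q.dil a) :=
  (Q.c_mem _ (half_pos (mul_pos ha Q.ℓ_pos))).trans_le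
    (measure_mono (ball_half_subset_cube Q.c (a * Q.ℓ)))

theorem CubeOf.measure_pos (Q : CubeOf μ) : 0 < μ Q.set :=
  (Q.c_mem _ (half_pos Q.ℓ_pos)).trans_le (measure_mono (ball_half_subset_cube Q.c Q.ℓ))

theorem CubeOf.center_mem (Q : CubeOf μ) : Q.c ∈ Q.set := mem_cube_self Q.c Q.ℓ_pos.le

theorem CubeOf.isCompact_set (Q : CubeOf μ) : IsCompact Q.set := isCompact_cube Q.c Q.ℓ_pos.le

theorem CubeOf.side_le_of_subset (hd : 0 < d) (h : Q.set ⊆ R.set) : Q.ℓ ≤ R.ℓ := by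
  have vertex (s : ℝ) (hs : |s| = Q.ℓ / 2) : |Q.c ⟨0, hd⟩ + s - R.c ⟨0, hd⟩| ≤ R.ℓ / 2 :=
    h (a := WithLp.toLp 2 fun i ↦ Q.c i + s) (fun i ↦ by simp [hs]) ⟨0, hd⟩
  have hr := vertex (Q.ℓ / 2) (abs_of_pos (half_pos Q.ℓ_pos))
  have hl := vertex (-(Q.ℓ / 2)) (by rw [abs_neg, abs_of_pos (half_pos Q.ℓ_pos)])
  linarith [abs_le.1 hr, abs_le.1 hl]

theorem NQR_spec (Q R : CubeOf μ) : 1 ≤ NQR Q R ∧ R.ℓ ≤ 2 ^ NQR Q R * Q.ℓ := by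
  obtain ⟨k, hk⟩ := pow_unbounded_of_one_lt (R.ℓ / Q.ℓ) one_lt_two
  refine Nat.sInf_mem (s := {k : ℕ | 1 ≤ k ∧ R.ℓ ≤ 2 ^ k * Q.ℓ}) ⟨k + 1, by simp, ?_⟩
  exact (div_le_iff₀ Q.ℓ_pos).1 (hk.le.trans (pow_le_pow_right₀ one_le_two k.le_succ))

theorem two_pow_NQR_mul_le (h : Q.ℓ ≤ R.ℓ) : 2 ^ NQR Q R * Q.ℓ ≤ 2 * R.ℓ := by
  obtain ⟨k, hk⟩ := Nat.exists_eq_add_of_le' (NQR_spec Q R).1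
  have hlt : k < NQR Q R := by omega
  have hk' : 2 ^ k * Q.ℓ ≤ R.ℓ := by
    rcases k.eq_zero_or_pos with rfl | hk0
    · simpa using h
    · exact (not_le.1 fun hle ↦ Nat.notMem_of_lt_sInf hlt ⟨hk0, hle⟩).le
  rw [hk, pow_succ']
  linarith

theorem Kcoef_eq_sum_density (n : ℕ) (Q R : CubeOf μ) :
    Kcoef n Q R = 1 + ∑ k ∈ Finset.range (NQR Q R), density μ n Q.c (2 ^ (k + 1) * Q.ℓ) := by
  rw [Finset.range_eq_Ico, Finset.sum_Ico_add' (fun k ↦ density μ n Q.c (2 ^ k * Q.ℓ)) 0 _ 1]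
  rfl

theorem one_le_Kcoef (n : ℕ) (Q R : CubeOf μ) : 1 ≤ Kcoef n Q R := by
  have := Q.ℓ_pos
  rw [Kcoef_eq_sum_density]
  linarith [Finset.sum_nonneg fun k (_ : k ∈ Finset.range (NQR Q R)) ↦
    density_nonneg μ n Q.c (r := 2 ^ (k + 1) * Q.ℓ) (by positivity)]

theorem CubeGrowth.Kcoef_le (hμ : CubeGrowth μ n A) (h : Q.ℓ ≤ R.ℓ) :
    Kcoef n Q R ≤ 1 + 2 ^ (n + 1) * scaleIntegral μ n Q.c Q.ℓ (4 * R.ℓ) := by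
  have hQ := Q.ℓ_pos
  have hsum := hμ.sum_density_le Q.c (r := 2 * Q.ℓ) (by positivity) (NQR Q R)
  simp only [← mul_assoc, ← pow_succ] at hsum
  have hscale : 2 ^ (NQR Q R + 1) * Q.ℓ ≤ 4 * R.ℓ := by
    rw [pow_succ']
    linarith [two_pow_NQR_mul_le h]
  rw [Kcoef_eq_sum_density]
  gcongr
  refine hsum.trans ?_
  gcongr
  exact hμ.scaleIntegral_mono Q.c hQ (by linarith) (by positivity) hscale

theorem CubeGrowth.scaleIntegral_le_Kcoef (hμ : CubeGrowth μ n A) (Q R : CubeOf μ) :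
    scaleIntegral μ n Q.c Q.ℓ R.ℓ ≤ 2 ^ n * Kcoef n Q R :=
  calc scaleIntegral μ n Q.c Q.ℓ R.ℓ
      ≤ scaleIntegral μ n Q.c Q.ℓ (2 ^ NQR Q R * Q.ℓ) :=
        hμ.scaleIntegral_mono Q.c Q.ℓ_pos le_rfl R.ℓ_pos (NQR_spec Q R).2
    _ ≤ 2 ^ n * ∑ k ∈ Finset.range (NQR Q R), density μ n Q.c (2 ^ (k + 1) * Q.ℓ) :=
        hμ.scaleIntegral_le_sum Q.c Q.ℓ_pos _
    _ ≤ 2 ^ n * Kcoef n Q R := by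
        rw [Kcoef_eq_sum_density]
        gcongr
        linarith

end Coefficients

section Doubling

theorem sum_range_le_of_le_mul_shift {u : ℕ → ℝ} {a q : ℝ} {m N : ℕ} (hu : ∀ k, 0 ≤ u k)
    (hua : ∀ k, u k ≤ a) (hq0 : 0 ≤ q) (hq1 : q < 1) (h : ∀ k < N, u k ≤ q * u (k + m)) :
    ∑ k ∈ Finset.range N, u k ≤ q * (m * a) / (1 - q) := by
  have hshift : ∑ k ∈ Finset.range N, u (k + m) ≤ ∑ k ∈ Finset.range N, u k + m * a := by
    have htail : ∑ k ∈ Finset.range m, u (N + k) ≤ m * a := by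
      simpa using Finset.sum_le_card_nsmul (Finset.range m) _ a fun k _ ↦ hua (N + k)
    have hadd := Finset.sum_range_add u m N
    rw [add_comm m N, Finset.sum_range_add u N m] at hadd
    simp only [add_comm m] at hadd
    linarith [Finset.sum_nonneg fun k (_ : k ∈ Finset.range m) ↦ hu k]
  have hself : ∑ k ∈ Finset.range N, u k ≤ q * (∑ k ∈ Finset.range N, u k + m * a) :=
    calc ∑ k ∈ Finset.range N, u k ≤ ∑ k ∈ Finset.range N, q * u (k + m) :=
          Finset.sum_le_sum fun k hk ↦ h k (Finset.mem_range.1 hk)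
      _ ≤ _ := by rw [← Finset.mul_sum]; gcongr
  rw [le_div_iff₀ (by linarith)]
  linarith

variable {d m n : ℕ} {μ : Measure (Euc d)} {A : ℝ≥0} {α β : ℝ} {Q : CubeOf μ}

theorem CubeOf.pow2_zero (Q : CubeOf μ) : Q.pow2 0 = Q := by
  simp [CubeOf.pow2]

theorem CubeOf.pow2_pow2 (Q : CubeOf μ) (j k : ℕ) : (Q.pow2 j).pow2 k = Q.pow2 (j + k) := by
  simp [CubeOf.pow2, pow_add, mul_left_comm, mul_assoc]

theorem CubeGrowth.density_le_of_not_isDoubling (hμ : CubeGrowth μ n A) (hα : α ≤ 2 ^ m)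
    (hβ : 0 < β) (hQ : ¬IsDoubling μ α β Q) :
    density μ n Q.c Q.ℓ ≤ 2 ^ (m * n) / β * density μ n Q.c (2 ^ m * Q.ℓ) := by
  have hℓ := Q.ℓ_pos
  have hmass : β * μ.real (cube Q.c Q.ℓ) ≤ μ.real (cube Q.c (2 ^ m * Q.ℓ)) := by
    have hlt := (not_le.1 hQ).le.trans
      (measure_mono (cube_mono Q.c (mul_le_mul_of_nonneg_right hα hℓ.le)))
    have := ENNReal.toReal_mono (hμ.measure_ne_top Q.c (2 ^ m * Q.ℓ)) hlt
    rwa [ENNReal.toReal_mul, ENNReal.toReal_ofReal hβ.le] at this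
  calc density μ n Q.c Q.ℓ = β * μ.real (cube Q.c Q.ℓ) / (β * Q.ℓ ^ n) := by
        rw [density, mul_div_mul_left _ _ hβ.ne']
    _ ≤ μ.real (cube Q.c (2 ^ m * Q.ℓ)) / (β * Q.ℓ ^ n) := by gcongr
    _ = 2 ^ (m * n) / β * density μ n Q.c (2 ^ m * Q.ℓ) := by
        rw [density, mul_pow, ← pow_mul]
        field_simp

/-- A bound, given by `CubeGrowth.scaleIntegral_le_of_not_isDoubling`, for the scale integral along
a chain `Q, 2Q, 4Q, …` of cubes which are not `(2^m, β)`-doubling, under growth with constant `A`.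
Such densities grow geometrically with ratio `β / 2^(mn)`, so they are summable. -/
noncomputable def chainConst (m n : ℕ) (A : ℝ≥0) (β : ℝ) : ℝ :=
  2 ^ n * (2 ^ (m * n) / β * (m * A) / (1 - 2 ^ (m * n) / β) + A)

theorem CubeGrowth.scaleIntegral_le_of_not_isDoubling (hμ : CubeGrowth μ n A) (hα : α ≤ 2 ^ m)
    (hβ : 2 ^ (m * n) < β) {N : ℕ} (hQ : ∀ k < N, ¬IsDoubling μ α β (Q.pow2 k)) :
    scaleIntegral μ n Q.c Q.ℓ (2 ^ N * Q.ℓ) ≤ chainConst m n A β := by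
  have hℓ := Q.ℓ_pos
  have hβ0 : 0 < β := lt_trans (by positivity) hβ
  set u : ℕ → ℝ := fun k ↦ density μ n Q.c (2 ^ k * Q.ℓ)
  have hu (k : ℕ) : 0 ≤ u k := density_nonneg μ n Q.c (by positivity)
  have huA (k : ℕ) : u k ≤ A := hμ.density_le Q.c (by positivity)
  have hsum : ∑ k ∈ Finset.range N, u k ≤
      2 ^ (m * n) / β * (m * A) / (1 - 2 ^ (m * n) / β) := by
    refine sum_range_le_of_le_mul_shift hu huA (by positivity) ((div_lt_one hβ0).2 hβ)
      fun k hk ↦ ?_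
    have := hμ.density_le_of_not_isDoubling hα hβ0 (hQ k hk)
    rwa [show 2 ^ m * (Q.pow2 k).ℓ = 2 ^ (k + m) * Q.ℓ by rw [CubeOf.pow2]; ring] at this
  have hshift : ∑ k ∈ Finset.range N, u (k + 1) ≤ ∑ k ∈ Finset.range N, u k + A := by
    linarith [Finset.sum_range_succ u N, Finset.sum_range_succ' u N, hu 0, huA N]
  refine (hμ.scaleIntegral_le_sum Q.c hℓ N).trans ?_
  rw [chainConst]
  gcongr
  linarith

theorem CubeGrowth.exists_isDoubling_pow2 (hμ : CubeGrowth μ n A) (hα : α ≤ 2 ^ m)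
    (hβ : 2 ^ (m * n) < β) (Q : CubeOf μ) : ∃ N, IsDoubling μ α β (Q.pow2 N) := by
  by_contra! hnot
  have hℓ := Q.ℓ_pos
  have hβ0 : 0 < β := lt_trans (by positivity) hβ
  have hgeom (j : ℕ) : density μ n Q.c Q.ℓ ≤
      (2 ^ (m * n) / β) ^ j * density μ n Q.c (2 ^ (m * j) * Q.ℓ) := by
    induction j with
    | zero => simp
    | succ j ih =>
      refine ih.trans ?_
      rw [pow_succ, mul_assoc, mul_add_one, add_comm, pow_add, mul_assoc]
      gcongr
      exact hμ.density_le_of_not_isDoubling hα hβ0 (hnot (m * j))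
  have hlim := (tendsto_pow_atTop_nhds_zero_of_lt_one (by positivity)
    ((div_lt_one hβ0).2 hβ)).mul_const (A : ℝ)
  have hzero : density μ n Q.c Q.ℓ ≤ 0 * A := ge_of_tendsto' hlim fun j ↦ (hgeom j).trans <| by
    gcongr
    exact hμ.density_le Q.c (by positivity)
  have hpos : 0 < density μ n Q.c Q.ℓ :=
    div_pos (ENNReal.toReal_pos Q.measure_pos.ne' (hμ.measure_ne_top Q.c Q.ℓ)) (by positivity)
  linarith

/-- The first `(α, β)`-doubling cube among `Q, 2Q, 4Q, …`. For `α = 2` this is `Q.tilde β`; other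
values of `α` are needed when the doubling condition has to match a dilation factor `ρ > 2`. -/
noncomputable def CubeOf.hull (α β : ℝ) (Q : CubeOf μ) : CubeOf μ :=
  Q.pow2 (sInf {N : ℕ | IsDoubling μ α β (Q.pow2 N)})

theorem CubeOf.side_le_hull (α β : ℝ) (Q : CubeOf μ) : Q.ℓ ≤ (Q.hull α β).ℓ :=
  le_mul_of_one_le_left Q.ℓ_pos.le (one_le_pow₀ one_le_two)

theorem CubeOf.hull_eq_self (hQ : IsDoubling μ α β Q) : Q.hull α β = Q := by
  have h0 : sInf {N : ℕ | IsDoubling μ α β (Q.pow2 N)} = 0 :=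
    Nat.sInf_eq_zero.2 (.inl (by rwa [mem_ofPred, Q.pow2_zero]))
  rw [hull, h0, pow2_zero]

theorem CubeGrowth.isDoubling_hull (hμ : CubeGrowth μ n A) (hα : α ≤ 2 ^ m)
    (hβ : 2 ^ (m * n) < β) (Q : CubeOf μ) : IsDoubling μ α β (Q.hull α β) :=
  Nat.sInf_mem (hμ.exists_isDoubling_pow2 hα hβ Q)

theorem CubeGrowth.scaleIntegral_hull_le (hμ : CubeGrowth μ n A) (hα : α ≤ 2 ^ m)
    (hβ : 2 ^ (m * n) < β) (Q : CubeOf μ) :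
    scaleIntegral μ n Q.c Q.ℓ (Q.hull α β).ℓ ≤ chainConst m n A β :=
  hμ.scaleIntegral_le_of_not_isDoubling hα hβ fun _ hk ↦ Nat.notMem_of_lt_sInf hk

end Doubling

section CommonHull

variable {d m n : ℕ} {μ : Measure (Euc d)} {A : ℝ≥0} {α β : ℝ} {P Q R : CubeOf μ}

/-- A bound for the scale integral from `r` to the side of `Q.hull α β`, centered at a point whose
distance to the center of `Q` is at most `r`, where `r` is at least the side of `Q`. -/
noncomputable def shiftedChainConst (m n : ℕ) (A : ℝ≥0) (β : ℝ) : ℝ :=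
  4 ^ n * (chainConst m n A β + 2 * (2 ^ n * A))

theorem CubeGrowth.scaleIntegral_hull_le_of_near (hμ : CubeGrowth μ n A) (hα : α ≤ 2 ^ m)
    (hβ : 2 ^ (m * n) < β) {x : Euc d} {r : ℝ} (hQr : Q.ℓ ≤ r) (hr : r ≤ (Q.hull α β).ℓ)
    (hx : ∀ i, |x i - Q.c i| ≤ r) :
    scaleIntegral μ n x r (Q.hull α β).ℓ ≤ shiftedChainConst m n A β := by
  have hr0 := Q.ℓ_pos.trans_le hQr
  refine (hμ.scaleIntegral_change_center hr0 hr hx).trans ?_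
  rw [shiftedChainConst]
  gcongr
  exact (hμ.scaleIntegral_mono Q.c Q.ℓ_pos hQr (hr0.trans_le hr) le_rfl).trans
    (hμ.scaleIntegral_hull_le hα hβ Q)

/-- A doubling cube concentric with `R` which contains the hulls of `R` and of any given cube `Q`
centered in `R`, and which is not much larger than that as measured by `Kcoef`. -/
noncomputable def CubeOf.commonHull (α β : ℝ) (Q R : CubeOf μ) : CubeOf μ :=
  CubeOf.hull α β ⟨R.c, 2 * max (Q.hull α β).ℓ (R.hull α β).ℓ,
    mul_pos two_pos (lt_max_of_lt_left (Q.hull α β).ℓ_pos), R.c_mem⟩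

theorem CubeOf.two_mul_max_le_commonHull (α β : ℝ) (Q R : CubeOf μ) :
    2 * max (Q.hull α β).ℓ (R.hull α β).ℓ ≤ (commonHull α β Q R).ℓ := by
  unfold commonHull
  exact side_le_hull α β ⟨R.c, _, _, R.c_mem⟩

theorem CubeOf.hull_subset_commonHull_right (α β : ℝ) (Q R : CubeOf μ) :
    (R.hull α β).set ⊆ (commonHull α β Q R).set :=
  cube_mono R.c <| by
    linarith [two_mul_max_le_commonHull α β Q R, le_max_right (Q.hull α β).ℓ (R.hull α β).ℓ,
      (R.hull α β).ℓ_pos]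

theorem CubeOf.hull_subset_commonHull_left (α β : ℝ) (h : Q.c ∈ R.set) :
    (Q.hull α β).set ⊆ (commonHull α β Q R).set :=
  cube_subset_cube (x := Q.c) (y := R.c) fun i ↦ (h i).trans <| by
    linarith [two_mul_max_le_commonHull α β Q R, le_max_right (Q.hull α β).ℓ (R.hull α β).ℓ,
      le_max_left (Q.hull α β).ℓ (R.hull α β).ℓ, R.side_le_hull α β]

/-- A bound for the scale integral from the side of `R` to four times the side of
`commonHull α β Q R`, centered at a point of `R`. -/
noncomputable def commonHullConst (m n : ℕ) (A : ℝ≥0) (β : ℝ) : ℝ :=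
  2 * shiftedChainConst m n A β + 3 * (2 ^ n * A)

theorem commonHullConst_nonneg (hβ : 2 ^ (m * n) < β) : 0 ≤ commonHullConst m n A β := by
  have hβ0 : 0 < β := lt_trans (by positivity) hβ
  have hgap : 0 ≤ 1 - 2 ^ (m * n) / β := sub_nonneg.2 ((div_le_one hβ0).2 hβ.le)
  unfold commonHullConst shiftedChainConst chainConst
  positivity

theorem CubeGrowth.scaleIntegral_max_hull_le (hμ : CubeGrowth μ n A) (hα : α ≤ 2 ^ m)
    (hβ : 2 ^ (m * n) < β) (hQR : Q.ℓ ≤ R.ℓ) (hQ : Q.c ∈ R.set) {x : Euc d} (hx : x ∈ R.set) :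
    scaleIntegral μ n x R.ℓ (max (Q.hull α β).ℓ (R.hull α β).ℓ) ≤ shiftedChainConst m n A β := by
  have hR := R.ℓ_pos
  have hRR := R.side_le_hull α β
  rcases le_total (Q.hull α β).ℓ (R.hull α β).ℓ with hle | hle
  · rw [max_eq_right hle]
    exact hμ.scaleIntegral_hull_le_of_near hα hβ le_rfl hRR fun i ↦ (hx i).trans (by linarith)
  · rw [max_eq_left hle]
    refine hμ.scaleIntegral_hull_le_of_near hα hβ hQR (hRR.trans hle) fun i ↦ ?_
    linarith [abs_sub_le (x i) (R.c i) (Q.c i), hx i, abs_sub_comm (R.c i) (Q.c i), hQ i]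

theorem CubeGrowth.scaleIntegral_commonHull_le (hμ : CubeGrowth μ n A) (hα : α ≤ 2 ^ m)
    (hβ : 2 ^ (m * n) < β) (hQR : Q.ℓ ≤ R.ℓ) (hQ : Q.c ∈ R.set) {x : Euc d} (hx : x ∈ R.set) :
    scaleIntegral μ n x R.ℓ (4 * (CubeOf.commonHull α β Q R).ℓ) ≤ commonHullConst m n A β := by
  have hR := R.ℓ_pos
  have hRM := (R.side_le_hull α β).trans (le_max_right (Q.hull α β).ℓ (R.hull α β).ℓ)
  have hMS := CubeOf.two_mul_max_le_commonHull α β Q R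
  have hchain := hμ.scaleIntegral_max_hull_le hα hβ hQR hQ hx
  have hchain' : scaleIntegral μ n x (2 * max (Q.hull α β).ℓ (R.hull α β).ℓ)
      (CubeOf.commonHull α β Q R).ℓ ≤ shiftedChainConst m n A β :=
    hμ.scaleIntegral_hull_le_of_near hα hβ le_rfl hMS fun i ↦ (hx i).trans (by linarith)
  set M := max (Q.hull α β).ℓ (R.hull α β).ℓ
  set s := (CubeOf.commonHull α β Q R).ℓ
  have hM : 0 < M := hR.trans_le hRM
  have hs : 0 < s := lt_of_lt_of_le (by linarith) hMS
  have hdouble := hμ.scaleIntegral_two_mul_le x hM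
  have hquadruple := hμ.scaleIntegral_le_of_le x hs (s := 4 * s) (N := 2) (by linarith)
    (by linarith)
  push_cast at hquadruple
  rw [commonHullConst]
  linarith [hμ.scaleIntegral_add x hR hM (t := 2 * M) (by linarith),
    hμ.scaleIntegral_add x hR (s := 2 * M) (by linarith) hs,
    hμ.scaleIntegral_add x hR hs (t := 4 * s) (by linarith)]

theorem CubeGrowth.Kcoef_commonHull_le (hμ : CubeGrowth μ n A) (hα : α ≤ 2 ^ m)
    (hβ : 2 ^ (m * n) < β) (hQR : Q.ℓ ≤ R.ℓ) (hQ : Q.c ∈ R.set) (hP : P.c ∈ R.set)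
    (hPS : P.ℓ ≤ (CubeOf.commonHull α β Q R).ℓ) :
    Kcoef n P (CubeOf.commonHull α β Q R) ≤
      1 + 2 ^ (n + 1) * (scaleIntegral μ n P.c P.ℓ R.ℓ + commonHullConst m n A β) := by
  have hS := (CubeOf.commonHull α β Q R).ℓ_pos
  have hadd := hμ.scaleIntegral_add P.c P.ℓ_pos R.ℓ_pos
    (t := 4 * (CubeOf.commonHull α β Q R).ℓ) (by positivity)
  refine (hμ.Kcoef_le hPS).trans ?_
  rw [← hadd]
  gcongr
  exact hμ.scaleIntegral_commonHull_le hα hβ hQR hQ hP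

end CommonHull

section Regular

variable {d m n : ℕ} {μ : Measure (Euc d)} {A : ℝ≥0} {α β : ℝ} {Q R : CubeOf μ}
  {g : CubeOf μ → ℝ} {C : ℝ≥0∞}

/-- The numbers `g Q` attached to cubes vary slowly along nested `(α, β)`-doubling cubes: the
regularity condition of `RBMO(μ)`, where `g Q` is the mean of a function over `Q`. -/
def RegularOnDoubling (n : ℕ) (α β : ℝ) (g : CubeOf μ → ℝ) (C : ℝ≥0∞) : Prop :=
  ∀ Q R : CubeOf μ, Q.set ⊆ R.set → IsDoubling μ α β Q → IsDoubling μ α β R →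
    edist (g Q) (g R) ≤ C * ENNReal.ofReal (Kcoef n Q R)

theorem RegularOnDoubling.edist_hull_hull_le_of_scaleIntegral_le
    (hg : RegularOnDoubling n α β g C) (hμ : CubeGrowth μ n A) (hα : α ≤ 2 ^ m)
    (hβ : 2 ^ (m * n) < β) (hQR : Q.ℓ ≤ R.ℓ) (hQ : Q.c ∈ R.set) {a : ℝ} (ha0 : 0 ≤ a)
    (ha : scaleIntegral μ n Q.c Q.ℓ R.ℓ ≤ a) :
    edist (g (Q.hull α β)) (g (R.hull α β)) ≤
      C * ENNReal.ofReal (2 * (1 + 2 ^ (n + 1) * (a + commonHullConst m n A β))) := by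
  set S := CubeOf.commonHull α β Q R
  have hS : IsDoubling μ α β S := hμ.isDoubling_hull hα hβ _
  have hMS : max (Q.hull α β).ℓ (R.hull α β).ℓ ≤ S.ℓ := by
    linarith [CubeOf.two_mul_max_le_commonHull α β Q R, le_max_left (Q.hull α β).ℓ (R.hull α β).ℓ,
      (Q.hull α β).ℓ_pos]
  have hKQ : Kcoef n (Q.hull α β) S ≤ 1 + 2 ^ (n + 1) * (a + commonHullConst m n A β) := by
    refine (hμ.Kcoef_commonHull_le hα hβ hQR hQ (P := Q.hull α β) hQ
      ((le_max_left _ _).trans hMS)).trans ?_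
    gcongr
    exact (hμ.scaleIntegral_mono Q.c Q.ℓ_pos (Q.side_le_hull α β) R.ℓ_pos le_rfl).trans ha
  have hKR : Kcoef n (R.hull α β) S ≤ 1 + 2 ^ (n + 1) * (a + commonHullConst m n A β) := by
    refine (hμ.Kcoef_commonHull_le hα hβ hQR hQ (P := R.hull α β) R.center_mem
      ((le_max_right _ _).trans hMS)).trans ?_
    gcongr
    refine (hμ.scaleIntegral_mono R.c R.ℓ_pos (R.side_le_hull α β) R.ℓ_pos le_rfl).trans ?_
    rwa [scaleIntegral, intervalIntegral.integral_same]
  have hbound : 0 ≤ 1 + 2 ^ (n + 1) * (a + commonHullConst m n A β) :=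
    zero_le_one.trans ((one_le_Kcoef n _ S).trans hKQ)
  rw [two_mul, ENNReal.ofReal_add hbound hbound, mul_add]
  refine (edist_triangle_right _ _ (g S)).trans (add_le_add ?_ ?_)
  · exact (hg _ S (CubeOf.hull_subset_commonHull_left α β hQ) (hμ.isDoubling_hull hα hβ Q)
      hS).trans (by gcongr)
  · exact (hg _ S (CubeOf.hull_subset_commonHull_right α β Q R) (hμ.isDoubling_hull hα hβ R)
      hS).trans (by gcongr)

theorem RegularOnDoubling.edist_hull_hull_le (hg : RegularOnDoubling n α β g C) (hd : 0 < d)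
    (hμ : CubeGrowth μ n A) (hα : α ≤ 2 ^ m) (hβ : 2 ^ (m * n) < β) (h : Q.set ⊆ R.set) :
    edist (g (Q.hull α β)) (g (R.hull α β)) ≤
      C * ENNReal.ofReal (2 * (1 + 2 ^ (n + 1) * (2 ^ n + commonHullConst m n A β))) *
        ENNReal.ofReal (Kcoef n Q R) := by
  have hQR := CubeOf.side_le_of_subset hd h
  have hQ := h Q.center_mem
  have hK := one_le_Kcoef n Q R
  have hconst := commonHullConst_nonneg (A := A) hβ
  refine (hg.edist_hull_hull_le_of_scaleIntegral_le hμ hα hβ hQR hQ (by positivity)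
    (hμ.scaleIntegral_le_Kcoef Q R)).trans ?_
  rw [mul_assoc, ← ENNReal.ofReal_mul (by positivity)]
  gcongr C * ENNReal.ofReal ?_
  nlinarith [mul_nonneg (pow_nonneg zero_le_two (n + 1) : (0 : ℝ) ≤ 2 ^ (n + 1))
    (mul_nonneg hconst (sub_nonneg.2 hK))]

end Regular

section MeanValues

variable {X E : Type*} [MeasurableSpace X] [NormedAddCommGroup E] {μ : Measure X} {s : Set X}
  {f : X → E}

theorem setLIntegral_edist_le_add (μ : Measure X) (s : Set X) (f : X → E) (a b : E) :
    ∫⁻ x in s, edist (f x) b ∂μ ≤ ∫⁻ x in s, edist (f x) a ∂μ + edist a b * μ s :=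
  calc ∫⁻ x in s, edist (f x) b ∂μ ≤ ∫⁻ x in s, (edist (f x) a + edist a b) ∂μ :=
        lintegral_mono fun _ ↦ edist_triangle _ _ _
    _ = _ := by rw [lintegral_add_right _ measurable_const, setLIntegral_const]

variable [NormedSpace ℝ E] [CompleteSpace E]

theorem edist_setAverage_mul_measure_le (hf : IntegrableOn f s μ) (hs : μ s ≠ ⊤) (a : E) :
    edist (⨍ x in s, f x ∂μ) a * μ s ≤ ∫⁻ x in s, edist (f x) a ∂μ := by
  have hsub : μ.real s • ((⨍ x in s, f x ∂μ) - a) = ∫ x in s, (f x - a) ∂μ := by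
    rw [integral_sub hf (integrableOn_const hs), setIntegral_const, smul_sub,
      measure_smul_setAverage f hs]
  calc edist (⨍ x in s, f x ∂μ) a * μ s = ‖∫ x in s, (f x - a) ∂μ‖ₑ := by
        rw [← hsub, enorm_smul, ← edist_eq_enorm_sub, mul_comm, Real.enorm_of_nonneg
          measureReal_nonneg, measureReal_def, ENNReal.ofReal_toReal hs]
    _ ≤ ∫⁻ x in s, edist (f x) a ∂μ := by
        simp only [edist_eq_enorm_sub]
        exact enorm_integral_le_lintegral_enorm _

theorem setLIntegral_edist_setAverage_le (hf : IntegrableOn f s μ) (hs : μ s ≠ ⊤) (a : E) :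
    ∫⁻ x in s, edist (f x) (⨍ y in s, f y ∂μ) ∂μ ≤ 2 * ∫⁻ x in s, edist (f x) a ∂μ := by
  refine (setLIntegral_edist_le_add μ s f a _).trans ?_
  rw [two_mul, edist_comm a]
  gcongr
  exact edist_setAverage_mul_measure_le hf hs a

end MeanValues

section Coverings

-- The map `π` makes room for balls of another metric than that of `Y`, such as the cubes of `ℝ^d`.
theorem exists_setLIntegral_le_of_closedBall (X Y : Type*) [MetricSpace X]
    [SecondCountableTopology X] [HasBesicovitchCovering X] [MeasurableSpace X]
    [OpensMeasurableSpace X] [MeasurableSpace Y] :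
    ∃ N : ℕ, ∀ (μ : Measure Y) (π : Y → X) (φ : Y → ℝ≥0∞) (s E Z : Set Y) (r : Y → ℝ) (r₀ : ℝ)
      (C : ℝ≥0∞), Measurable π → s ≤ᵐ[μ] E → (∀ y ∈ E, 0 < r y) → (∀ y ∈ E, r y ≤ r₀) →
      (∀ y ∈ E, π ⁻¹' closedBall (π y) (r y) ⊆ Z) →
      (∀ y ∈ E, ∫⁻ z in π ⁻¹' closedBall (π y) (r y), φ z ∂μ ≤
        C * μ (π ⁻¹' closedBall (π y) (r y))) →
      ∫⁻ z in s, φ z ∂μ ≤ N * (C * μ Z) := by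
  obtain ⟨N, τ, hτ, hN⟩ := HasBesicovitchCovering.no_satelliteConfig (α := X)
  refine ⟨N, fun μ π φ s E Z r r₀ C hπ hsE hr hr₀ hZ hφ ↦ ?_⟩
  let q : Besicovitch.BallPackage E X :=
    { c y := π y, r y := r y, rpos y := hr y y.2, r_bound := r₀, r_le y := hr₀ y y.2 }
  let B (y : E) : Set Y := π ⁻¹' closedBall (π y) (r y)
  obtain ⟨t, ht_disj, ht_cover⟩ := Besicovitch.exist_disjoint_covering_families hτ hN q
  have ht_count (i : Fin N) : (t i).Countable :=
    (ht_disj i).countable_of_nonempty_interior fun y _ ↦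
      ⟨π y, ball_subset_interior_closedBall (mem_ball_self (hr y y.2))⟩
  have hE_sub : E ⊆ ⋃ i, ⋃ y ∈ t i, B y := fun y hy ↦ by
    obtain ⟨i, z, hz, hyz⟩ := by simpa only [mem_iUnion] using ht_cover ⟨⟨y, hy⟩, rfl⟩
    exact mem_iUnion.2 ⟨i, mem_iUnion₂.2 ⟨z, hz, ball_subset_closedBall hyz⟩⟩
  have hfamily (i : Fin N) : ∫⁻ z in ⋃ y ∈ t i, B y, φ z ∂μ ≤ C * μ Z := by
    rw [lintegral_biUnion (ht_count i) (fun y _ ↦ hπ measurableSet_closedBall)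
      fun y hy z hz hyz ↦ (ht_disj i hy hz hyz).preimage π]
    calc ∑' y : t i, ∫⁻ z in B y, φ z ∂μ ≤ ∑' y : t i, C * μ (B y) :=
          ENNReal.tsum_le_tsum fun y ↦ hφ y.1 y.1.2
      _ = C * μ (⋃ y ∈ t i, B y) := by
          rw [ENNReal.tsum_mul_left, measure_biUnion (ht_count i)
            (fun y hy z hz hyz ↦ (ht_disj i hy hz hyz).preimage π)
            fun y _ ↦ hπ measurableSet_closedBall]
      _ ≤ C * μ Z := by gcongr; exact iUnion₂_subset fun y _ ↦ hZ y y.2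
  calc ∫⁻ z in s, φ z ∂μ ≤ ∫⁻ z in ⋃ i, ⋃ y ∈ t i, B y, φ z ∂μ :=
        lintegral_mono_set' (hsE.trans hE_sub.eventuallyLE)
    _ ≤ ∑' i : Fin N, ∫⁻ z in ⋃ y ∈ t i, B y, φ z ∂μ := lintegral_iUnion_le _ _
    _ ≤ ∑' _i : Fin N, C * μ Z := ENNReal.tsum_le_tsum hfamily
    _ = N * (C * μ Z) := by simp

theorem exists_setLIntegral_le_of_cube (d : ℕ) :
    ∃ N : ℕ, ∀ (μ : Measure (Euc d)) (φ : Euc d → ℝ≥0∞) (s Z : Set (Euc d)) (r₀ : ℝ) (C : ℝ≥0∞),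
      (∀ᵐ x ∂μ, x ∈ s → ∃ r, 0 < r ∧ r ≤ r₀ ∧ cube x r ⊆ Z ∧
        ∫⁻ y in cube x r, φ y ∂μ ≤ C * μ (cube x r)) →
      ∫⁻ y in s, φ y ∂μ ≤ N * (C * μ Z) := by
  obtain ⟨N, hN⟩ := exists_setLIntegral_le_of_closedBall (Fin d → ℝ) (Euc d)
  refine ⟨N, fun μ φ s Z r₀ C h ↦ ?_⟩
  choose! r hr hr₀ hZ hφ using fun x (hx : ∃ r, 0 < r ∧ r ≤ r₀ ∧ cube x r ⊆ Z ∧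
    ∫⁻ y in cube x r, φ y ∂μ ≤ C * μ (cube x r)) ↦ hx
  refine hN μ WithLp.ofLp φ s _ Z (fun x ↦ r x / 2) (r₀ / 2) C (by fun_prop) h
    (fun x hx ↦ half_pos (hr x hx)) (fun x hx ↦ div_le_div_of_nonneg_right (hr₀ x hx) two_pos.le)
    (fun x hx ↦ ?_) fun x hx ↦ ?_
  all_goals rw [← cube_eq_preimage_closedBall x (hr x hx).le]
  exacts [hZ x hx, hφ x hx]

theorem exists_finset_cube_subset_biUnion (d : ℕ) {s : ℝ} (hs : 0 < s) :
    ∃ t : Finset (Euc d), ∀ (x : Euc d) (r : ℝ), 0 < r →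
      cube x r ⊆ ⋃ z ∈ t, cube (x + r • z) (s * r) := by
  obtain ⟨t, -, ht⟩ := (isCompact_cube (0 : Euc d) zero_le_one).elim_nhds_subcover
    (fun z ↦ ball z (s / 2)) fun z _ ↦ ball_mem_nhds z (half_pos hs)
  refine ⟨t, fun x r hr y hy ↦ ?_⟩
  have hscaled : r⁻¹ • (y - x) ∈ cube (0 : Euc d) 1 := fun i ↦ by
    simp only [PiLp.smul_apply, PiLp.sub_apply, smul_eq_mul, PiLp.zero_apply, sub_zero, abs_mul,
      abs_inv, abs_of_pos hr]
    rw [inv_mul_le_iff₀ hr]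
    linarith [hy i]
  obtain ⟨z, hz, hyz⟩ := mem_iUnion₂.1 (ht hscaled)
  refine mem_iUnion₂.2 ⟨z, hz, fun i ↦ ?_⟩
  have hi := ball_half_subset_cube z s hyz i
  simp only [PiLp.smul_apply, PiLp.sub_apply, PiLp.add_apply, smul_eq_mul] at hi ⊢
  rw [show y i - (x i + r * z i) = r * (r⁻¹ * (y i - x i) - z i) by field_simp; ring, abs_mul,
    abs_of_pos hr]
  nlinarith

theorem ae_mem_measSupp {d : ℕ} (μ : Measure (Euc d)) : ∀ᵐ x ∂μ, x ∈ measSupp μ := by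
  filter_upwards [Measure.support_mem_ae] with x hx r hr
  exact (nhds_basis_ball.mem_measureSupport).1 hx r hr

theorem exists_setLIntegral_cube_le (d : ℕ) {s : ℝ} (hs : 0 < s) :
    ∃ N : ℕ, ∀ (μ : Measure (Euc d)) (φ : Euc d → ℝ≥0∞) (x : Euc d) (r : ℝ) (b : ℝ≥0∞), 0 < r →
      (∀ y ∈ measSupp μ, y ∈ cube x r → ∫⁻ z in cube y (s * r), φ z ∂μ ≤ b) →
      ∫⁻ z in cube x r, φ z ∂μ ≤ N * b := by
  obtain ⟨t, ht⟩ := exists_finset_cube_subset_biUnion d (half_pos hs)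
  refine ⟨t.card, fun μ φ x r b hr hb ↦ ?_⟩
  let piece (z : Euc d) : Set (Euc d) := cube (x + r • z) (s / 2 * r) ∩ (cube x r ∩ measSupp μ)
  have hpiece (z : Euc d) : ∫⁻ y in piece z, φ y ∂μ ≤ b := by
    rcases (piece z).eq_empty_or_nonempty with hempty | ⟨y, hyz, hyx, hy⟩
    · simp [hempty]
    · refine (lintegral_mono_set fun w hw i ↦ ?_).trans (hb y hy hyx)
      have hwz := hw.1 i
      linarith [hyz i, abs_sub_le (w i) ((x + r • z) i) (y i), abs_sub_comm (y i) ((x + r • z) i)]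
  have hcover : cube x r ≤ᵐ[μ] ⋃ z ∈ t, piece z := by
    filter_upwards [ae_mem_measSupp μ] with y hy hyx
    obtain ⟨z, hz, hyz⟩ := mem_iUnion₂.1 (ht x r hr hyx)
    exact mem_iUnion₂.2 ⟨z, hz, hyz, hyx, hy⟩
  calc ∫⁻ z in cube x r, φ z ∂μ ≤ ∫⁻ y in ⋃ z ∈ t, piece z, φ y ∂μ := lintegral_mono_set' hcover
    _ ≤ ∑ z ∈ t, ∫⁻ y in piece z, φ y ∂μ := by
        rw [← t.sum_coe_sort, ← tsum_fintype (L := .unconditional _), ← t.set_biUnion_coe,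
          biUnion_eq_iUnion]
        exact lintegral_iUnion_le _ _
    _ ≤ t.card * b := by simpa using Finset.sum_le_card_nsmul t _ b fun z _ ↦ hpiece z

end Coverings

section Conditions

variable {d m n : ℕ} {μ : Measure (Euc d)} {A : ℝ≥0} {α β ρ : ℝ} {f : Euc d → ℝ}
  {fQ : CubeOf μ → ℝ} {C : ℝ≥0∞}

theorem ofReal_abs_sub_eq_edist (a b : ℝ) : ENNReal.ofReal |a - b| = edist a b := by
  rw [edist_dist, Real.dist_eq]

theorem CubeOf.measure_le_measure_dil (Q : CubeOf μ) (hρ : 1 ≤ ρ) : μ Q.set ≤ μ (Q.dil ρ) :=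
  measure_mono (cube_mono Q.c (le_mul_of_one_le_left Q.ℓ_pos.le hρ))

theorem CondB.regularOnDoubling (h : CondB μ n ρ f C) (β : ℝ) :
    RegularOnDoubling n ρ β (fun Q ↦ mQ μ Q f) (C * (2 * ENNReal.ofReal β)) := by
  intro Q R hQR hQ hR
  rw [← ofReal_abs_sub_eq_edist]
  calc ENNReal.ofReal |mQ μ Q f - mQ μ R f|
      ≤ C * ENNReal.ofReal (Kcoef n Q R) * (μ (Q.dil ρ) / μ Q.set + μ (R.dil ρ) / μ R.set) :=
        h.2 Q R hQR
    _ ≤ C * ENNReal.ofReal (Kcoef n Q R) * (ENNReal.ofReal β + ENNReal.ofReal β) := by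
        gcongr
        exacts [ENNReal.div_le_of_le_mul hQ, ENNReal.div_le_of_le_mul hR]
    _ = C * (2 * ENNReal.ofReal β) * ENNReal.ofReal (Kcoef n Q R) := by ring

theorem CubeGrowth.Kcoef_hull_le (hμ : CubeGrowth μ n A) (hα : α ≤ 2 ^ m)
    (hβ : 2 ^ (m * n) < β) (Q : CubeOf μ) :
    Kcoef n Q (Q.hull α β) ≤ 1 + 2 ^ (n + 1) * (chainConst m n A β + 2 * (2 ^ n * A)) := by
  have hh := (Q.hull α β).ℓ_pos
  refine (hμ.Kcoef_le (Q.side_le_hull α β)).trans ?_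
  rw [← hμ.scaleIntegral_add Q.c Q.ℓ_pos hh (t := 4 * (Q.hull α β).ℓ) (by positivity)]
  gcongr
  · exact hμ.scaleIntegral_hull_le hα hβ Q
  · exact_mod_cast hμ.scaleIntegral_le_of_le Q.c hh (N := 2) (by positivity) (by linarith)

theorem CondB.setLIntegral_edist_hull_le (h : CondB μ n ρ f C) (hμ : CubeGrowth μ n A)
    (hρ : 1 ≤ ρ) (hm : ρ ≤ 2 ^ m) (hβ : 2 ^ (m * n) < β) (Q : CubeOf μ) :
    ∫⁻ x in Q.set, edist (f x) (mQ μ (Q.hull ρ β) f) ∂μ ≤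
      C * (1 + ENNReal.ofReal (1 + 2 ^ (n + 1) * (chainConst m n A β + 2 * (2 ^ n * A))) *
        (1 + ENNReal.ofReal β)) * μ (Q.dil ρ) := by
  set k := 1 + 2 ^ (n + 1) * (chainConst m n A β + 2 * (2 ^ n * A))
  have hmean : edist (mQ μ Q f) (mQ μ (Q.hull ρ β) f) ≤
      C * ENNReal.ofReal k * (μ (Q.dil ρ) / μ Q.set + ENNReal.ofReal β) := by
    rw [← ofReal_abs_sub_eq_edist]
    refine (h.2 Q (Q.hull ρ β) (cube_mono Q.c (Q.side_le_hull ρ β))).trans ?_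
    gcongr
    · exact hμ.Kcoef_hull_le hm hβ Q
    · exact ENNReal.div_le_of_le_mul (hμ.isDoubling_hull hm hβ Q)
  have hoscillation := h.1 Q
  simp only [ofReal_abs_sub_eq_edist] at hoscillation
  calc ∫⁻ x in Q.set, edist (f x) (mQ μ (Q.hull ρ β) f) ∂μ
      ≤ C * μ (Q.dil ρ) +
          C * ENNReal.ofReal k * (μ (Q.dil ρ) / μ Q.set + ENNReal.ofReal β) * μ Q.set :=
        (setLIntegral_edist_le_add μ Q.set f (mQ μ Q f) _).trans (by gcongr)
    _ = C * μ (Q.dil ρ) + C * ENNReal.ofReal k *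
          (μ (Q.dil ρ) / μ Q.set * μ Q.set + ENNReal.ofReal β * μ Q.set) := by ring
    _ ≤ C * μ (Q.dil ρ) + C * ENNReal.ofReal k *
          (μ (Q.dil ρ) + ENNReal.ofReal β * μ (Q.dil ρ)) := by
        gcongr C * μ (Q.dil ρ) + C * ENNReal.ofReal k * (?_ + ENNReal.ofReal β * ?_)
        · exact (ENNReal.div_mul_cancel Q.measure_pos.ne' (hμ.measure_ne_top Q.c Q.ℓ)).le
        · exact Q.measure_le_measure_dil hρ
    _ = C * (1 + ENNReal.ofReal k * (1 + ENNReal.ofReal β)) * μ (Q.dil ρ) := by ring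

theorem exists_starStarBoundWith_of_condB (hd : 0 < d) (n : ℕ) (A : ℝ≥0) (hρ : 1 ≤ ρ) :
    ∃ C : ℝ≥0, ∀ μ : Measure (Euc d), CubeGrowth μ n A → ∀ (f : Euc d → ℝ) (C' : ℝ≥0∞),
      CondB μ n ρ f C' → ∃ fQ : CubeOf μ → ℝ, StarStarBoundWith μ n ρ f fQ (C * C') := by
  obtain ⟨m, hm⟩ := pow_unbounded_of_one_lt ρ one_lt_two
  set β : ℝ := 2 ^ (m * n) + 1
  have hβ : 2 ^ (m * n) < β := lt_add_one _
  set a : ℝ≥0 := 1 + (1 + 2 ^ (n + 1) * (chainConst m n A β + 2 * (2 ^ n * A))).toNNReal *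
    (1 + β.toNNReal)
  set b : ℝ≥0 := 2 * β.toNNReal *
    (2 * (1 + 2 ^ (n + 1) * (2 ^ n + commonHullConst m n A β))).toNNReal
  refine ⟨a + b, fun μ hμ f C' h ↦ ⟨fun Q ↦ mQ μ (Q.hull ρ β) f, fun Q ↦ ?_, fun Q R hQR ↦ ?_⟩⟩
  · simp only [ofReal_abs_sub_eq_edist]
    calc ∫⁻ x in Q.set, edist (f x) (mQ μ (Q.hull ρ β) f) ∂μ ≤ C' * a * μ (Q.dil ρ) := by
          simpa [a, ENNReal.ofReal] using h.setLIntegral_edist_hull_le hμ hρ hm.le hβ Q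
      _ ≤ (a + b) * C' * μ (Q.dil ρ) := by
          rw [mul_comm C']; gcongr; exact le_self_add
  · rw [ofReal_abs_sub_eq_edist]
    calc edist (mQ μ (Q.hull ρ β) f) (mQ μ (R.hull ρ β) f)
        ≤ b * C' * ENNReal.ofReal (Kcoef n Q R) := by
          refine ((h.regularOnDoubling β).edist_hull_hull_le hd hμ hm.le hβ hQR).trans_eq ?_
          simp only [b, ENNReal.coe_mul, ENNReal.coe_ofNat, ENNReal.ofReal]
          ring
      _ ≤ (a + b) * C' * ENNReal.ofReal (Kcoef n Q R) := by gcongr; exact le_add_self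

theorem CubeGrowth.Kcoef_le_of_le (hμ : CubeGrowth μ n A) {Q R : CubeOf μ} (h : Q.ℓ ≤ R.ℓ) {N : ℕ}
    (hN : 4 * R.ℓ ≤ 2 ^ N * Q.ℓ) : Kcoef n Q R ≤ 1 + 2 ^ (n + 1) * (N * (2 ^ n * A)) := by
  have hR := R.ℓ_pos
  refine (hμ.Kcoef_le h).trans ?_
  gcongr
  exact hμ.scaleIntegral_le_of_le Q.c Q.ℓ_pos (by positivity) hN

theorem StarStarBoundWith.edist_le_of_subset_of_subset (h : StarStarBoundWith μ n ρ f fQ C)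
    {P Q S : CubeOf μ} {k : ℝ} (hPS : P.set ⊆ S.set) (hQS : Q.set ⊆ S.set) (hP : Kcoef n P S ≤ k)
    (hQ : Kcoef n Q S ≤ k) : edist (fQ P) (fQ Q) ≤ 2 * C * ENNReal.ofReal k := by
  have hregular (Q : CubeOf μ) (hQS : Q.set ⊆ S.set) (hQ : Kcoef n Q S ≤ k) :
      edist (fQ Q) (fQ S) ≤ C * ENNReal.ofReal k := by
    rw [← ofReal_abs_sub_eq_edist]
    exact (h.2 Q S hQS).trans (by gcongr)
  rw [mul_assoc, two_mul]
  exact (edist_triangle_right _ _ _).trans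
    (add_le_add (hregular P hPS hP) (hregular Q hQS hQ))

theorem StarStarBoundWith.setLIntegral_edist_le (h : StarStarBoundWith μ n ρ f fQ C) (hρ : 1 ≤ ρ)
    {P Q S : CubeOf μ} {k : ℝ} (hPS : P.set ⊆ S.set) (hQS : Q.set ⊆ S.set) (hP : Kcoef n P S ≤ k)
    (hQ : Kcoef n Q S ≤ k) :
    ∫⁻ x in P.set, edist (f x) (fQ Q) ∂μ ≤ (1 + 2 * ENNReal.ofReal k) * C * μ (P.dil ρ) := by
  have hoscillation := h.1 P
  simp only [ofReal_abs_sub_eq_edist] at hoscillation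
  calc ∫⁻ x in P.set, edist (f x) (fQ Q) ∂μ
      ≤ C * μ (P.dil ρ) + 2 * C * ENNReal.ofReal k * μ (P.dil ρ) :=
        (setLIntegral_edist_le_add μ P.set f (fQ P) _).trans <| add_le_add hoscillation <|
          mul_le_mul' (h.edist_le_of_subset_of_subset hPS hQS hP hQ) (P.measure_le_measure_dil hρ)
    _ = (1 + 2 * ENNReal.ofReal k) * C * μ (P.dil ρ) := by ring

theorem StarStarBoundWith.setLIntegral_cube_edist_le (h : StarStarBoundWith μ n ρ f fQ C)
    (hμ : CubeGrowth μ n A) (hρ : 1 ≤ ρ) {s η : ℝ} (hs : 0 < s) (hs1 : s ≤ 1)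
    (hη : 1 + ρ * s ≤ η) {j : ℕ} (hj : 8 ≤ 2 ^ j * s) {Q : CubeOf μ} {y : Euc d}
    (hy : y ∈ measSupp μ) (hyQ : y ∈ Q.set) :
    ∫⁻ x in cube y (s * Q.ℓ), edist (f x) (fQ Q) ∂μ ≤
      (1 + 2 * ENNReal.ofReal (1 + 2 ^ (n + 1) * (j * (2 ^ n * A)))) * C * μ (Q.dil η) := by
  have hQ := Q.ℓ_pos
  let P : CubeOf μ := ⟨y, s * Q.ℓ, by positivity, hy⟩
  have hPQ : P.ℓ ≤ Q.ℓ := mul_le_of_le_one_left hQ.le hs1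
  have hdil : P.dil ρ ⊆ Q.dil η := cube_subset_cube fun i ↦ (hyQ i).trans <| by
    change Q.ℓ / 2 ≤ (η * Q.ℓ - ρ * (s * Q.ℓ)) / 2
    nlinarith
  have hPS : P.set ⊆ (Q.pow2 1).set := cube_subset_cube fun i ↦ (hyQ i).trans <| by
    change Q.ℓ / 2 ≤ (2 ^ 1 * Q.ℓ - P.ℓ) / 2
    linarith
  have hQS : Q.ℓ ≤ (Q.pow2 1).ℓ := by
    change Q.ℓ ≤ 2 ^ 1 * Q.ℓ
    linarith
  have hSP : 4 * (Q.pow2 1).ℓ ≤ 2 ^ j * P.ℓ := by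
    change 4 * (2 ^ 1 * Q.ℓ) ≤ 2 ^ j * (s * Q.ℓ)
    nlinarith
  refine (h.setLIntegral_edist_le hρ hPS (cube_mono Q.c hQS)
    (hμ.Kcoef_le_of_le (hPQ.trans hQS) hSP)
    (hμ.Kcoef_le_of_le hQS (hSP.trans (by gcongr)))).trans ?_
  gcongr

theorem exists_starStarBoundWith_change_dil (d n : ℕ) (A : ℝ≥0) {ρ η : ℝ} (hρ : 1 ≤ ρ)
    (hη : 1 < η) :
    ∃ C : ℝ≥0, ∀ μ : Measure (Euc d), CubeGrowth μ n A →
      ∀ (f : Euc d → ℝ) (fQ : CubeOf μ → ℝ) (C' : ℝ≥0∞),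
        StarStarBoundWith μ n ρ f fQ C' → StarStarBoundWith μ n η f fQ (C * C') := by
  have hρ0 : 0 < ρ := by linarith
  set s := min 1 ((η - 1) / ρ)
  have hs : 0 < s := lt_min one_pos (div_pos (by linarith) hρ0)
  have hsρ : ρ * s ≤ η - 1 := (le_div_iff₀' hρ0).1 (min_le_right _ _)
  obtain ⟨T, hT⟩ := exists_setLIntegral_cube_le d hs
  obtain ⟨j, hj⟩ := pow_unbounded_of_one_lt (8 / s) one_lt_two
  set k : ℝ := 1 + 2 ^ (n + 1) * (j * (2 ^ n * A))
  refine ⟨T * (1 + 2 * k.toNNReal) + 1, fun μ hμ f fQ C' h ↦ ⟨fun Q ↦ ?_, fun Q R hQR ↦ ?_⟩⟩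
  · simp only [ofReal_abs_sub_eq_edist]
    calc ∫⁻ x in Q.set, edist (f x) (fQ Q) ∂μ
        ≤ T * ((1 + 2 * ENNReal.ofReal k) * C' * μ (Q.dil η)) :=
          hT μ _ Q.c Q.ℓ _ Q.ℓ_pos fun y hy hyQ ↦ h.setLIntegral_cube_edist_le hμ hρ hs
            (min_le_left _ _) (by linarith) ((div_lt_iff₀ hs).1 hj).le hy hyQ
      _ = T * (1 + 2 * k.toNNReal) * C' * μ (Q.dil η) := by rw [ENNReal.ofReal]; ring
      _ ≤ _ := by push_cast; gcongr; exact le_self_add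
  · refine (h.2 Q R hQR).trans ?_
    gcongr
    exact le_mul_of_one_le_left zero_le (by simp)

end Conditions

section DoublingCubes

variable {d m n : ℕ} {μ : Measure (Euc d)} {A : ℝ≥0} {α β : ℝ} {f : Euc d → ℝ} {C : ℝ≥0∞}

theorem CubeGrowth.exists_isDoubling_pow2_scaleIntegral_le (hμ : CubeGrowth μ n A)
    (hα : α ≤ 2 ^ m) (hβ : 2 ^ (m * n) < β) {P : CubeOf μ} (hP : IsDoubling μ α β P) {s : ℝ}
    (hs : P.ℓ ≤ s) :
    ∃ k, IsDoubling μ α β (P.pow2 k) ∧ (P.pow2 k).ℓ ≤ s ∧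
      scaleIntegral μ n P.c (P.pow2 k).ℓ s ≤ 2 ^ n * A + chainConst m n A β := by
  have hPℓ := P.ℓ_pos
  obtain ⟨N, hN, hN'⟩ := exists_nat_pow_near ((one_le_div hPℓ).2 hs) one_lt_two
  rw [le_div_iff₀ hPℓ] at hN
  rw [div_lt_iff₀ hPℓ] at hN'
  set k := Nat.findGreatest (fun k ↦ IsDoubling μ α β (P.pow2 k)) N
  have hkN : k ≤ N := Nat.findGreatest_le N
  have hk : IsDoubling μ α β (P.pow2 k) :=
    Nat.findGreatest_spec (P := fun k ↦ IsDoubling μ α β (P.pow2 k)) N.zero_le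
      (by rwa [P.pow2_zero])
  have hstep : scaleIntegral μ n P.c (2 ^ k * P.ℓ) (2 ^ (k + 1) * P.ℓ) ≤ 2 ^ n * A := by
    rw [pow_succ', mul_assoc]
    exact hμ.scaleIntegral_two_mul_le P.c (by positivity)
  have hchain : scaleIntegral μ n P.c (2 ^ (k + 1) * P.ℓ) (2 ^ (N + 1) * P.ℓ) ≤
      chainConst m n A β := by
    have hnot (i : ℕ) (hi : i < N - k) : ¬IsDoubling μ α β ((P.pow2 (k + 1)).pow2 i) := by
      rw [P.pow2_pow2]
      exact Nat.findGreatest_is_greatest (P := fun k ↦ IsDoubling μ α β (P.pow2 k))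
        (n := N) (show k < k + 1 + i by omega) (by omega)
    have hlength : 2 ^ (N - k) * (2 ^ (k + 1) * P.ℓ) = 2 ^ (N + 1) * P.ℓ := by
      rw [← mul_assoc, ← pow_add]; congr 2; omega
    rw [← hlength]
    exact hμ.scaleIntegral_le_of_not_isDoubling hα hβ hnot
  refine ⟨k, hk, le_trans ?_ hN, ?_⟩
  · exact mul_le_mul_of_nonneg_right (pow_le_pow_right₀ one_le_two hkN) hPℓ.le
  · calc scaleIntegral μ n P.c (2 ^ k * P.ℓ) s
        ≤ scaleIntegral μ n P.c (2 ^ k * P.ℓ) (2 ^ (N + 1) * P.ℓ) :=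
          hμ.scaleIntegral_mono P.c (by positivity) le_rfl (hPℓ.trans_le hs) hN'.le
      _ ≤ 2 ^ n * A + chainConst m n A β := by
          rw [← hμ.scaleIntegral_add P.c (s := 2 ^ (k + 1) * P.ℓ) (by positivity) (by positivity)
            (by positivity)]
          exact add_le_add hstep hchain

theorem CondC.regularOnDoubling (h : CondC μ n β f C) :
    RegularOnDoubling n 2 β (fun Q ↦ mQ μ Q f) C := fun Q R hQR hQ hR ↦ by
  rw [← ofReal_abs_sub_eq_edist]
  exact h.2 Q R hQR hQ hR

/-- A bound, relative to the constant of `CondC`, for the difference of the means over `Q.tilde β`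
and over a doubling cube centered in `Q` which one doubling of the side and a chain of non-doubling
cubes bring to the scale of `Q`. -/
noncomputable def selectionConst (n : ℕ) (A : ℝ≥0) (β : ℝ) : ℝ :=
  2 * (1 + 2 ^ (n + 1) * (2 ^ n * A + chainConst 1 n A β + commonHullConst 1 n A β))

theorem CondC.setLIntegral_edist_tilde_le (h : CondC μ n β f C) (hμ : CubeGrowth μ n A)
    (hβ : 2 ^ n < β) {P Q : CubeOf μ} (hP : IsDoubling μ 2 β P) (hPQ : P.ℓ ≤ Q.ℓ)
    (hPc : P.c ∈ Q.set)
    (ha : scaleIntegral μ n P.c P.ℓ Q.ℓ ≤ 2 ^ n * A + chainConst 1 n A β) :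
    ∫⁻ x in P.set, edist (f x) (mQ μ (Q.tilde β) f) ∂μ ≤
      (1 + ENNReal.ofReal (selectionConst n A β)) * C * μ P.set := by
  have hmean := h.regularOnDoubling.edist_hull_hull_le_of_scaleIntegral_le (m := 1) hμ (by norm_num)
    (by simpa using hβ) hPQ hPc ((scaleIntegral_nonneg μ n P.c P.ℓ_pos.le hPQ).trans ha) ha
  rw [CubeOf.hull_eq_self hP] at hmean
  have hoscillation := h.1 P hP
  simp only [ofReal_abs_sub_eq_edist] at hoscillation
  calc ∫⁻ x in P.set, edist (f x) (mQ μ (Q.tilde β) f) ∂μ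
      ≤ C * μ P.set + C * ENNReal.ofReal (selectionConst n A β) * μ P.set :=
        (setLIntegral_edist_le_add μ P.set f (mQ μ P f) _).trans <|
          add_le_add hoscillation (mul_le_mul_left hmean _)
    _ = (1 + ENNReal.ofReal (selectionConst n A β)) * C * μ P.set := by ring

theorem exists_starStarBoundWith_of_condC (hd : 0 < d) (n : ℕ) (A : ℝ≥0) (hβ : 2 ^ n < β) :
    ∃ C : ℝ≥0, ∀ μ : Measure (Euc d), CubeGrowth μ n A → SmallDoublingAE μ β →
      ∀ (f : Euc d → ℝ) (C' : ℝ≥0∞), CondC μ n β f C' →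
        StarStarBoundWith μ n 2 f (fun Q ↦ mQ μ (Q.tilde β) f) (C * C') := by
  obtain ⟨N, hN⟩ := exists_setLIntegral_le_of_cube d
  have hβ' : 2 ^ (1 * n) < β := by simpa using hβ
  have hα : (2 : ℝ) ≤ 2 ^ 1 := by norm_num
  set a : ℝ≥0 := N * (1 + (selectionConst n A β).toNNReal)
  set b : ℝ≥0 := (2 * (1 + 2 ^ (n + 1) * (2 ^ n + commonHullConst 1 n A β))).toNNReal
  refine ⟨a + b, fun μ hμ hsmall f C' h ↦ ⟨fun Q ↦ ?_, fun Q R hQR ↦ ?_⟩⟩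
  · simp only [ofReal_abs_sub_eq_edist]
    have hselect : ∀ᵐ x ∂μ, x ∈ Q.set → ∃ r, 0 < r ∧ r ≤ Q.ℓ ∧ cube x r ⊆ Q.dil 2 ∧
        ∫⁻ y in cube x r, edist (f y) (mQ μ (Q.tilde β) f) ∂μ ≤
          (1 + ENNReal.ofReal (selectionConst n A β)) * C' * μ (cube x r) := by
      filter_upwards [hsmall] with x hx hxQ
      obtain ⟨P, rfl, hPQ, hP⟩ := hx Q.ℓ Q.ℓ_pos
      obtain ⟨k, hk, hkQ, hkI⟩ := hμ.exists_isDoubling_pow2_scaleIntegral_le hα hβ' hP hPQ.le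
      refine ⟨(P.pow2 k).ℓ, (P.pow2 k).ℓ_pos, hkQ, cube_subset_cube fun i ↦ (hxQ i).trans ?_,
        h.setLIntegral_edist_tilde_le hμ hβ hk hkQ hxQ hkI⟩
      linarith
    calc ∫⁻ x in Q.set, edist (f x) (mQ μ (Q.tilde β) f) ∂μ
        ≤ N * ((1 + ENNReal.ofReal (selectionConst n A β)) * C' * μ (Q.dil 2)) :=
          hN μ _ Q.set _ Q.ℓ _ hselect
      _ = a * C' * μ (Q.dil 2) := by simp only [a, ENNReal.ofReal]; push_cast; ring
      _ ≤ (a + b) * C' * μ (Q.dil 2) := by gcongr; exact le_self_add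
  · rw [ofReal_abs_sub_eq_edist]
    calc edist (mQ μ (Q.tilde β) f) (mQ μ (R.tilde β) f)
        ≤ C' * b * ENNReal.ofReal (Kcoef n Q R) :=
          h.regularOnDoubling.edist_hull_hull_le hd hμ hα hβ' hQR
      _ ≤ (a + b) * C' * ENNReal.ofReal (Kcoef n Q R) := by
          rw [mul_comm C']; gcongr; exact le_add_self

end DoublingCubes

section Comparison

variable {d n : ℕ} {μ : Measure (Euc d)} {A : ℝ≥0} {β ρ : ℝ} {f : Euc d → ℝ}
  {fQ : CubeOf μ → ℝ} {C C' : ℝ≥0∞}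

theorem CondB.mono (h : CondB μ n ρ f C) (hC : C ≤ C') : CondB μ n ρ f C' :=
  ⟨fun Q ↦ (h.1 Q).trans (by gcongr), fun Q R hQR ↦ (h.2 Q R hQR).trans (by gcongr)⟩

theorem CondC.mono (h : CondC μ n β f C) (hC : C ≤ C') : CondC μ n β f C' :=
  ⟨fun Q hQ ↦ (h.1 Q hQ).trans (by gcongr),
    fun Q R hQR hQ hR ↦ (h.2 Q R hQR hQ hR).trans (by gcongr)⟩

theorem StarStarBoundWith.edist_mQ_mul_measure_le (h : StarStarBoundWith μ n ρ f fQ C)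
    (hμ : CubeGrowth μ n A) (hf : LocallyIntegrable f μ) (Q : CubeOf μ) :
    edist (mQ μ Q f) (fQ Q) * μ Q.set ≤ C * μ (Q.dil ρ) := by
  have hoscillation := h.1 Q
  simp only [ofReal_abs_sub_eq_edist] at hoscillation
  exact (edist_setAverage_mul_measure_le (hf.integrableOn_isCompact Q.isCompact_set)
    (hμ.measure_ne_top Q.c Q.ℓ) _).trans hoscillation

theorem StarStarBoundWith.condB (h : StarStarBoundWith μ n ρ f fQ C) (hμ : CubeGrowth μ n A)
    (hρ : 1 ≤ ρ) (hf : LocallyIntegrable f μ) : CondB μ n ρ f (2 * C) := by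
  refine ⟨fun Q ↦ ?_, fun Q R hQR ↦ ?_⟩
  · have hoscillation := h.1 Q
    simp only [ofReal_abs_sub_eq_edist] at hoscillation ⊢
    rw [mul_assoc]
    exact (setLIntegral_edist_setAverage_le (hf.integrableOn_isCompact Q.isCompact_set)
      (hμ.measure_ne_top Q.c Q.ℓ) (fQ Q)).trans (by gcongr)
  · rw [ofReal_abs_sub_eq_edist]
    set K := ENNReal.ofReal (Kcoef n Q R)
    have hK : 1 ≤ K := ENNReal.one_le_ofReal.2 (one_le_Kcoef n Q R)
    have hmean (Q : CubeOf μ) : edist (mQ μ Q f) (fQ Q) ≤ C * (μ (Q.dil ρ) / μ Q.set) := by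
      rw [← mul_div_assoc, ENNReal.le_div_iff_mul_le (.inl Q.measure_pos.ne')
        (.inl (hμ.measure_ne_top Q.c Q.ℓ))]
      exact h.edist_mQ_mul_measure_le hμ hf Q
    have hratio (Q : CubeOf μ) : 1 ≤ μ (Q.dil ρ) / μ Q.set := by
      rw [ENNReal.le_div_iff_mul_le (.inl Q.measure_pos.ne')
        (.inl (hμ.measure_ne_top Q.c Q.ℓ)), one_mul]
      exact Q.measure_le_measure_dil hρ
    have hregular := h.2 Q R hQR
    rw [ofReal_abs_sub_eq_edist] at hregular
    set p := μ (Q.dil ρ) / μ Q.set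
    set q := μ (R.dil ρ) / μ R.set
    calc edist (mQ μ Q f) (mQ μ R f) ≤ C * p + C * K + C * q := by
          refine (edist_triangle4 _ (fQ Q) (fQ R) _).trans ?_
          rw [edist_comm (fQ R)]
          gcongr
          exacts [hmean Q, hmean R]
      _ ≤ C * (K * p) + C * (K * (p + q)) + C * (K * q) := by
          gcongr
          · exact le_mul_of_one_le_left zero_le hK
          · exact le_mul_of_one_le_right zero_le ((hratio Q).trans le_self_add)
          · exact le_mul_of_one_le_left zero_le hK
      _ = 2 * C * K * (p + q) := by ring

theorem CondB.condC (h : CondB μ n 2 f C) (β : ℝ) :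
    CondC μ n β f (2 * ENNReal.ofReal β * C) := by
  refine ⟨fun Q hQ ↦ ?_, fun Q R hQR hQ hR ↦ ?_⟩
  · calc ∫⁻ x in Q.set, ENNReal.ofReal |f x - mQ μ Q f| ∂μ ≤ C * (ENNReal.ofReal β * μ Q.set) :=
          (h.1 Q).trans (by gcongr; exact hQ)
      _ = 1 * ENNReal.ofReal β * C * μ Q.set := by ring
      _ ≤ 2 * ENNReal.ofReal β * C * μ Q.set := by gcongr; exact one_le_two
  · have hregular := h.regularOnDoubling β Q R hQR hQ hR
    rw [← ofReal_abs_sub_eq_edist, mul_comm C] at hregular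
    exact hregular

theorem RBMOBoundWith.condC (h : RBMOBoundWith μ n β f C) (hβ : 1 ≤ β) :
    CondC μ n β f (ENNReal.ofReal β * C) := by
  refine ⟨fun Q hQ ↦ ?_, fun Q R hQR hQ hR ↦ (h.2 Q R hQR hQ hR).trans ?_⟩
  · have hoscillation := h.1 Q
    rw [show Q.tilde β = Q from CubeOf.hull_eq_self hQ] at hoscillation
    rw [mul_comm _ C, mul_assoc]
    exact hoscillation.trans (by gcongr; exact hQ)
  · gcongr
    exact le_mul_of_one_le_left zero_le (ENNReal.one_le_ofReal.2 hβ)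

theorem StarStarBoundWith.rbmoBoundWith
    (h : StarStarBoundWith μ n 2 f (fun Q ↦ mQ μ (Q.tilde β) f) C) : RBMOBoundWith μ n β f C := by
  refine ⟨h.1, fun Q R hQR hQ hR ↦ ?_⟩
  have htilde {Q : CubeOf μ} (hQ : IsDoubling μ 2 β Q) : Q.tilde β = Q := CubeOf.hull_eq_self hQ
  simpa only [htilde hQ, htilde hR] using h.2 Q R hQR

theorem le_sInf_mul_of_forall_le {S : Set ℝ≥0∞} {a b : ℝ≥0∞} (hb0 : b ≠ 0) (hb : b ≠ ⊤)
    (h : ∀ c ∈ S, a ≤ c * b) : a ≤ sInf S * b :=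
  (ENNReal.div_le_iff hb0 hb).1 (le_sInf fun c hc ↦ (ENNReal.div_le_iff hb0 hb).2 (h c hc))

theorem rbmoBoundWith_rbmoNorm (hμ : CubeGrowth μ n A) (β : ℝ) (f : Euc d → ℝ) :
    RBMOBoundWith μ n β f (rbmoNorm μ n β f) :=
  ⟨fun Q ↦ le_sInf_mul_of_forall_le (Q.measure_dil_pos two_pos).ne'
      (hμ.measure_ne_top Q.c (2 * Q.ℓ)) fun _ hC ↦ hC.1 Q,
    fun Q R hQR hQ hR ↦ le_sInf_mul_of_forall_le
      (ENNReal.ofReal_pos.2 (one_pos.trans_le (one_le_Kcoef n Q R))).ne' ENNReal.ofReal_ne_top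
      fun _ hC ↦ hC.2 Q R hQR hQ hR⟩

end Comparison

theorem exists_rbmoNorm_le_of_condC {d : ℕ} (hd : 0 < d) (n : ℕ) (A : ℝ≥0) {β : ℝ}
    (hβ : 2 ^ n < β) :
    ∃ C : ℝ≥0, ∀ μ : Measure (Euc d), CubeGrowth μ n A → SmallDoublingAE μ β →
      ∀ (f : Euc d → ℝ) (Cc : ℝ≥0∞), CondC μ n β f Cc → rbmoNorm μ n β f ≤ C * Cc := by
  obtain ⟨C, hC⟩ := exists_starStarBoundWith_of_condC hd n A hβ
  exact ⟨C, fun μ hμ hsmall f Cc h ↦ sInf_le (hC μ hμ hsmall f Cc h).rbmoBoundWith⟩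

theorem exists_condC_of_condB {d : ℕ} (hd : 0 < d) (n : ℕ) (A : ℝ≥0) (β : ℝ) {ρ : ℝ}
    (hρ : 1 ≤ ρ) :
    ∃ C : ℝ≥0, ∀ μ : Measure (Euc d), CubeGrowth μ n A → ∀ f : Euc d → ℝ,
      LocallyIntegrable f μ → ∀ Cb : ℝ≥0∞, CondB μ n ρ f Cb → CondC μ n β f (C * Cb) := by
  obtain ⟨C₁, hC₁⟩ := exists_starStarBoundWith_of_condB hd n A hρ
  obtain ⟨C₂, hC₂⟩ :=
    exists_starStarBoundWith_change_dil d n A hρ (one_lt_two : (1 : ℝ) < 2)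
  refine ⟨2 * β.toNNReal * (2 * (C₂ * C₁)), fun μ hμ f hf Cb h ↦ ?_⟩
  obtain ⟨fQ, hfQ⟩ := hC₁ μ hμ f Cb h
  convert ((hC₂ μ hμ f fQ _ hfQ).condB hμ one_le_two hf).condC β using 1
  push_cast [ENNReal.ofReal]
  ring

theorem exists_condB_of_condC {d : ℕ} (hd : 0 < d) (n : ℕ) (A : ℝ≥0) {β ρ : ℝ} (hβ : 2 ^ n < β)
    (hρ : 1 < ρ) :
    ∃ C : ℝ≥0, ∀ μ : Measure (Euc d), CubeGrowth μ n A → SmallDoublingAE μ β → ∀ f : Euc d → ℝ,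
      LocallyIntegrable f μ → ∀ Cc : ℝ≥0∞, CondC μ n β f Cc → CondB μ n ρ f (C * Cc) := by
  obtain ⟨C₁, hC₁⟩ := exists_starStarBoundWith_of_condC hd n A hβ
  obtain ⟨C₂, hC₂⟩ :=
    exists_starStarBoundWith_change_dil d n A (one_le_two : (1 : ℝ) ≤ 2) hρ
  refine ⟨2 * (C₂ * C₁), fun μ hμ hsmall f hf Cc h ↦ ?_⟩
  convert (hC₂ μ hμ f _ _ (hC₁ μ hμ hsmall f Cc h)).condB hμ hρ.le hf using 1
  push_cast
  ring

/-- Lemma 2.10: equivalent characterizations (a) ⟺ (b) ⟺ (c) of `RBMO(μ)`,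
with comparable best constants. -/
theorem statement3 (d n : ℕ) (hn : 1 ≤ n) (hnd : n ≤ d) (C₀ βd ρ : ℝ) (hC₀ : 0 < C₀)
    (hβ : (2 : ℝ) ^ n < βd) (hρ : 1 < ρ) :
    ∃ C : ℝ, 1 ≤ C ∧ ∀ μ : MeasureTheory.Measure (Euc d), GrowthBound μ n C₀ →
      SmallDoublingAE μ βd →
      ∀ f : Euc d → ℝ, MeasureTheory.LocallyIntegrable f μ →
        (∀ Cb : ℝ≥0∞, CondB μ n ρ f Cb → rbmoNorm μ n βd f ≤ ENNReal.ofReal C * Cb) ∧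
        (∀ Cc : ℝ≥0∞, CondC μ n βd f Cc → rbmoNorm μ n βd f ≤ ENNReal.ofReal C * Cc) ∧
        CondB μ n ρ f (ENNReal.ofReal C * rbmoNorm μ n βd f) ∧
        CondC μ n βd f (ENNReal.ofReal C * rbmoNorm μ n βd f) := by
  have hd : 0 < d := hn.trans hnd
  have hβ1 : 1 ≤ βd := (one_le_pow₀ one_le_two).trans hβ.le
  set A : ℝ≥0 := C₀.toNNReal * (d + 1) ^ n
  obtain ⟨Cac, hac⟩ := exists_rbmoNorm_le_of_condC hd n A hβ
  obtain ⟨Ccb, hcb⟩ := exists_condC_of_condB hd n A βd hρ.le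
  obtain ⟨Cbc, hbc⟩ := exists_condB_of_condC hd n A hβ hρ
  obtain ⟨C, hC⟩ : ∃ C : ℝ≥0, ∀ c ∈ [1, Cac * Ccb, Cac, Cbc * βd.toNNReal, βd.toNNReal], c ≤ C :=
    ⟨_, fun _ ↦ List.le_sum_of_mem⟩
  have hle (c : ℝ≥0) (hc : c ∈ [1, Cac * Ccb, Cac, Cbc * βd.toNNReal, βd.toNNReal]) (t : ℝ≥0∞) :
      c * t ≤ ENNReal.ofReal C * t := by
    rw [ENNReal.ofReal_coe_nnreal]; gcongr; exact hC c hc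
  refine ⟨C, hC 1 (by simp), fun μ hgrowth hsmall f hf ↦ ?_⟩
  have hμ : CubeGrowth μ n A := hgrowth.cubeGrowth
  have hcondC := (rbmoBoundWith_rbmoNorm hμ βd f).condC hβ1
  refine ⟨fun Cb hCb ↦ (hac μ hμ hsmall f _ (hcb μ hμ f hf Cb hCb)).trans ?_,
    fun Cc hCc ↦ (hac μ hμ hsmall f Cc hCc).trans (hle _ (by simp) _),
    (hbc μ hμ hsmall f hf _ hcondC).mono ?_, hcondC.mono (hle _ (by simp) _)⟩
  · simpa [mul_assoc] using hle (Cac * Ccb) (by simp) Cb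
  · simpa [mul_assoc, ENNReal.ofReal] using hle (Cbc * βd.toNNReal) (by simp) (rbmoNorm μ n βd f)
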